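/- arXiv:1306.3841 — 2 statements merged into one kernel-verified Lean document; each statement's English description precedes it below -/
import Mathlib

section
/- Let E = E(2,M,p) be a planar fractal percolation with integer M ≥ 2 and 0 < p ≤ 1. Then for ℙ(·|E ≠ ∅)-almost every realization, for ALL straight lines ℓ (including those parallel to the coordinate axes), the orthogonal projection proj_ℓ(E) of E onto ℓ satisfies dim_H(proj_ℓ(E)) = min{1, dim_H(E)}, where dim_H denotes Hausdorff dimension. -/
open MeasureTheory Set ENNReal ProbabilityTheory Real

noncomputable section

/-- The alphabet indexing the `M^d` subcubes of a cube in `[0,1]^d`. -/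
abbrev Alpha (d M : ℕ) : Type := Fin d → Fin M

/-- Finite nonempty words over the alphabet; they index `M`-adic cubes. -/
abbrev Word (d M : ℕ) : Type := {w : List (Alpha d M) // w ≠ []}

/-- The sample space: `{0,1}`-labelings of all finite nonempty words. -/
abbrev PercSpace (d M : ℕ) : Type := Word d M → Bool

/-- `P` is the product measure making the labels i.i.d. Bernoulli(`p`). -/
def IsBernoulliPerc (d M : ℕ) (p : ℝ) (P : Measure (PercSpace d M)) : Prop :=
  IsProbabilityMeasure P ∧
    ∀ (S : Finset (Word d M)) (b : Word d M → Bool),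
      P {ω | ∀ w ∈ S, ω w = b w} =
        ∏ w ∈ S, if b w then ENNReal.ofReal p else ENNReal.ofReal (1 - p)

/-- A level-`w.length` cube is retained iff its word and every nonempty prefix
of its word carry label 1. -/
def Retained (d M : ℕ) (ω : PercSpace d M) (w : List (Alpha d M)) : Prop :=
  ∀ (u : List (Alpha d M)) (hu : u ≠ []), u <+: w → ω ⟨u, hu⟩ = true

/-- The `i`-th coordinate of the lower-left corner of the cube indexed by `w`. -/
def wordBase (d M : ℕ) (w : List (Alpha d M)) (i : Fin d) : ℝ :=
  ∑ j : Fin w.length, ((w.get j) i : ℝ) * (M : ℝ) ^ (-(j : ℤ) - 1)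

/-- The closed `M`-adic cube of level `w.length` indexed by the word `w`. -/
def wordCube (d M : ℕ) (w : List (Alpha d M)) : Set (EuclideanSpace ℝ (Fin d)) :=
  {x | ∀ i, wordBase d M w i ≤ x i ∧ x i ≤ wordBase d M w i + (M : ℝ) ^ (-(w.length : ℤ))}

/-- `E_n`, the union of the retained level-`n` cubes. -/
def approx (d M : ℕ) (ω : PercSpace d M) (n : ℕ) : Set (EuclideanSpace ℝ (Fin d)) :=
  ⋃ w ∈ {w : List (Alpha d M) | w.length = n ∧ Retained d M ω w}, wordCube d M w

/-- The fractal percolation set `E = ⋂_{n ≥ 1} E_n`. -/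
def percLimit (d M : ℕ) (ω : PercSpace d M) : Set (EuclideanSpace ℝ (Fin d)) :=
  ⋂ n ∈ {n : ℕ | 1 ≤ n}, approx d M ω n

/-- Orthogonal projection of the plane onto the line through `z` with direction `v`. -/
def lineProj (z v : EuclideanSpace ℝ (Fin 2)) (x : EuclideanSpace ℝ (Fin 2)) :
    EuclideanSpace ℝ (Fin 2) :=
  z + ((@inner ℝ _ _ (x - z) v) / (@inner ℝ _ _ v v)) • v

/-- Bernoulli measure on Bool. -/
def bern (p : ℝ) : Measure Bool :=
  ENNReal.ofReal p • Measure.dirac true + ENNReal.ofReal (1 - p) • Measure.dirac false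

lemma bern_prob {p : ℝ} (hp0 : 0 < p) (hp1 : p ≤ 1) : IsProbabilityMeasure (bern p) := by
  constructor
  simp [bern]
  rw [← ENNReal.ofReal_add hp0.le (by linarith)]
  simp

lemma bern_singleton (p : ℝ) (b : Bool) :
    bern p {b} = if b then ENNReal.ofReal p else ENNReal.ofReal (1 - p) := by
  cases b <;> simp [bern]

lemma perc_eq_infinitePi {M : ℕ} {p : ℝ} (hp0 : 0 < p) (hp1 : p ≤ 1)
    {P : Measure (PercSpace 2 M)} (hP : IsBernoulliPerc 2 M p P) :
    haveI := bern_prob hp0 hp1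
    P = Measure.infinitePi (fun _ : Word 2 M => bern p) := by
  have := bern_prob hp0 hp1
  have := hP.1
  refine (Measure.isProjectiveLimit_infinitePi (fun _ : Word 2 M => bern p)).unique ?_ |>.symm
  intro s
  refine Measure.ext_of_singleton (fun b => ?_)
  classical
  rw [Measure.pi_singleton, Measure.map_apply (Finset.measurable_restrict _) (measurableSet_singleton _)]
  have h := hP.2 s (fun w => if h : w ∈ s then b ⟨w, h⟩ else true)
  have h2 : (s.restrict ⁻¹' {b} : Set (PercSpace 2 M)) =
      {ω | ∀ w ∈ s, ω w = (fun w => if h : w ∈ s then b ⟨w, h⟩ else true) w} := by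
    ext ω
    simp only [mem_preimage, mem_singleton_iff, mem_ofPred_eq]
    constructor
    · rintro rfl w hw
      simp [hw]
    · intro h
      funext w
      have := h w.1 w.2
      simpa using this
  rw [h2, h, ← Finset.prod_coe_sort]
  refine Finset.prod_congr rfl (fun w _ => ?_)
  rw [bern_singleton]
  simp

/-- Words equivalent to (head, tail). -/
def wordEquiv (M : ℕ) : (Alpha 2 M × List (Alpha 2 M)) ≃ Word 2 M where
  toFun x := ⟨x.1 :: x.2, by simp⟩
  invFun w := (w.1.head w.2, w.1.tail)
  left_inv x := by simp
  right_inv w := by simp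

/-- The labels of the subtree at letter `i`. -/
def shift (M : ℕ) (i : Alpha 2 M) (ω : PercSpace 2 M) : PercSpace 2 M :=
  fun w => ω ⟨i :: w.1, by simp⟩

lemma measurable_shift (M : ℕ) (i : Alpha 2 M) : Measurable (shift M i) := by
  unfold shift
  fun_prop

lemma perc_curry {M : ℕ} {p : ℝ} (hp0 : 0 < p) (hp1 : p ≤ 1)
    {P : Measure (PercSpace 2 M)} (hP : IsBernoulliPerc 2 M p P) :
    haveI := bern_prob hp0 hp1
    P.map (fun ω (i : Alpha 2 M) (t : List (Alpha 2 M)) => ω (wordEquiv M (i, t))) =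
      Measure.pi (fun _ => Measure.infinitePi (fun _ : List (Alpha 2 M) => bern p)) := by
  have := bern_prob hp0 hp1
  rw [← Measure.infinitePi_eq_pi, ← Measure.infinitePi_map_curry (fun (i : Alpha 2 M) (t : List (Alpha 2 M)) => bern p)]
  have h1 := Measure.infinitePi_map_piCongrLeft (X := fun _ => Bool) (μ := fun _ : Word 2 M => bern p) (wordEquiv M)
  rw [perc_eq_infinitePi hp0 hp1 hP, ← h1, Measure.map_map (by fun_prop) (by fun_prop)]
  congr 1

lemma subtree_prob {M : ℕ} {p : ℝ} (hp0 : 0 < p) (hp1 : p ≤ 1)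
    {P : Measure (PercSpace 2 M)} (hP : IsBernoulliPerc 2 M p P) (H : Set (PercSpace 2 M))
    (hH : MeasurableSet H) :
    haveI := bern_prob hp0 hp1
    Measure.infinitePi (fun _ : List (Alpha 2 M) => bern p)
      {y | y [] = false ∨ (fun w : Word 2 M => y w.1) ∈ H} =
      ENNReal.ofReal (1 - p) + ENNReal.ofReal p * P H := by
  have := bern_prob hp0 hp1
  set Q := Measure.infinitePi (fun _ : List (Alpha 2 M) => bern p) with hQ
  have hmr : Measurable (fun (y : List (Alpha 2 M) → Bool) (w : Word 2 M) => y w.1) := by fun_prop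
  have hm0 : ∀ b : Bool, MeasurableSet {y : List (Alpha 2 M) → Bool | y [] = b} := fun b =>
    measurableSet_eq_fun (by fun_prop) (by fun_prop)
  have hpne : ENNReal.ofReal p ≠ 0 := by simpa using hp0
  have key : (ENNReal.ofReal p)⁻¹ • (Q.restrict {y | y [] = true}).map (fun y (w : Word 2 M) => y w.1) = P := by
    rw [perc_eq_infinitePi hp0 hp1 hP]
    refine Measure.eq_infinitePi _ (fun s t ht => ?_)
    rw [Measure.smul_apply, Measure.map_apply hmr (.pi s.countable_toSet fun _ _ ↦ ht _),
      Measure.restrict_apply (hmr (.pi s.countable_toSet fun _ _ ↦ ht _))]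
    classical
    let t' : List (Alpha 2 M) → Set Bool := fun w => if h : w ≠ [] then t ⟨w, h⟩ else {true}
    have hset : ((fun (y : List (Alpha 2 M) → Bool) (w : Word 2 M) => y w.1) ⁻¹' (Set.pi (s : Set (Word 2 M)) t) ∩ {y | y [] = true})
        = Set.pi ((insert [] (s.image Subtype.val) : Finset (List (Alpha 2 M))) : Set (List (Alpha 2 M))) t' := by
      ext y
      simp only [mem_inter_iff, mem_preimage, Set.mem_pi, Finset.mem_coe, mem_ofPred_eq, Finset.mem_insert, Finset.mem_image]
      constructor
      · rintro ⟨h1, h2⟩ w (rfl | ⟨v, hv, rfl⟩)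
        · simp [t', h2]
        · have := h1 v hv
          simp [t', v.2, this]
      · intro h
        refine ⟨fun v hv => ?_, ?_⟩
        · have := h v.1 (Or.inr ⟨v, hv, rfl⟩)
          simpa [t', v.2] using this
        · have := h [] (Or.inl rfl)
          simpa [t'] using this
    rw [hset, Measure.infinitePi_pi _ (fun _ _ => MeasurableSet.of_discrete), Finset.prod_insert (by simp),
      Finset.prod_image (by simp)]
    have : bern p (t' []) = ENNReal.ofReal p := by simp [t', bern_singleton]
    rw [this, smul_eq_mul, ← mul_assoc, ENNReal.inv_mul_cancel hpne (by simp), one_mul]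
    refine Finset.prod_congr rfl (fun v _ => ?_)
    simp [t', v.2]
  have hPH : ENNReal.ofReal p * P H = Q ((fun (y : List (Alpha 2 M) → Bool) (w : Word 2 M) => y w.1) ⁻¹' H ∩ {y | y [] = true}) := by
    rw [← key, Measure.smul_apply, Measure.map_apply hmr hH, Measure.restrict_apply (hmr hH), smul_eq_mul, ← mul_assoc,
      ENNReal.mul_inv_cancel hpne (by simp), one_mul]
  have h0 : Q {y | y [] = false} = ENNReal.ofReal (1 - p) := by
    have : {y : List (Alpha 2 M) → Bool | y [] = false} = Set.pi (({[]} : Finset (List (Alpha 2 M))) : Set _) (fun _ => {false}) := by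
      ext y; simp
    rw [this, Measure.infinitePi_pi _ (fun _ _ => MeasurableSet.of_discrete)]
    simp [bern_singleton]
  rw [hPH, ← h0, ← measure_union _ ((hmr hH).inter (hm0 true))]
  · congr 1
    ext y
    simp only [mem_ofPred_eq, mem_union, mem_inter_iff, mem_preimage]
    cases y [] <;> simp
  · rw [Set.disjoint_left]
    rintro y hy ⟨_, hy2⟩
    simp_all

/-- The branching identity. -/
lemma branching_prob {M : ℕ} {p : ℝ} (hp0 : 0 < p) (hp1 : p ≤ 1)
    {P : Measure (PercSpace 2 M)} (hP : IsBernoulliPerc 2 M p P) (H : Set (PercSpace 2 M))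
    (hH : MeasurableSet H) :
    P {ω | ∀ i : Alpha 2 M, ω ⟨[i], by simp⟩ = false ∨ shift M i ω ∈ H} =
      (ENNReal.ofReal (1 - p) + ENNReal.ofReal p * P H) ^ (M ^ 2) := by
  have := bern_prob hp0 hp1
  have hm : MeasurableSet {y : List (Alpha 2 M) → Bool | y [] = false ∨ (fun w : Word 2 M => y w.1) ∈ H} := by
    refine MeasurableSet.union (measurableSet_eq_fun (by fun_prop) (by fun_prop)) ?_
    exact (by fun_prop : Measurable (fun (y : List (Alpha 2 M) → Bool) (w : Word 2 M) => y w.1)) hH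
  have h := perc_curry hp0 hp1 hP
  have h2 := Measure.pi_pi (fun _ : Alpha 2 M => Measure.infinitePi (fun _ : List (Alpha 2 M) => bern p))
    (fun _ => {y | y [] = false ∨ (fun w : Word 2 M => y w.1) ∈ H})
  rw [← h, Measure.map_apply (by fun_prop) (.univ_pi fun _ => hm)] at h2
  simp only [subtree_prob hp0 hp1 hP H hH] at h2
  rw [Finset.prod_const] at h2
  have hc : (Finset.univ : Finset (Alpha 2 M)).card = M ^ 2 := by simp
  rw [hc] at h2
  rw [← h2]
  congr 1
  ext ω
  simp only [mem_ofPred_eq, mem_preimage, Set.mem_pi, mem_univ, true_imp_iff]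
  rfl

lemma convex_fix {N : ℕ} (hN : 2 ≤ N) {p e q : ℝ} (hp0 : 0 < p) (hp1 : p ≤ 1) (he0 : 0 ≤ e)
    (heq : e ≤ q) (hq : q < 1) (he : (1 - p + p * e) ^ N ≤ e) (hqf : q ≤ (1 - p + p * q) ^ N) :
    q = e := by
  by_contra hne
  have hlt : e < q := lt_of_le_of_ne heq (Ne.symm hne)
  have hsc := strictConvexOn_pow (n := N) hN
  set l := (1 - q) / (1 - e) with hl
  have h1e : 0 < 1 - e := by linarith
  have hl0 : 0 < l := div_pos (by linarith) h1e
  have hl1 : l < 1 := by rw [hl, div_lt_one h1e]; linarith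
  have hle : l * (1 - e) = 1 - q := by rw [hl]; field_simp
  have hx : (1 - p + p * e) ∈ Ici (0:ℝ) := by
    rw [Set.mem_Ici]; nlinarith
  have hy : (1:ℝ) ∈ Ici (0:ℝ) := by simp
  have hxy : 1 - p + p * e ≠ 1 := by nlinarith
  have := hsc.2 hx hy hxy hl0 (by linarith : 0 < 1 - l) (by ring)
  simp only [smul_eq_mul, one_pow, mul_one] at this
  have h3 : l * (1 - p + p * e) + (1 - l) = 1 - p + p * q := by linear_combination (-p) * hle
  rw [h3] at this
  nlinarith

/-- All words of length `n`. -/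
def words (M n : ℕ) : Finset (List (Alpha 2 M)) :=
  (Finset.univ : Finset (Fin n → Alpha 2 M)).image List.ofFn

lemma mem_words {M n : ℕ} {w : List (Alpha 2 M)} : w ∈ words M n ↔ w.length = n := by
  simp only [words, Finset.mem_image, Finset.mem_univ, true_and]
  constructor
  · rintro ⟨f, rfl⟩; simp
  · rintro rfl; exact ⟨w.get, List.ofFn_get w⟩

lemma card_words (M n : ℕ) : (words M n).card = (M ^ 2) ^ n := by
  rw [words, Finset.card_image_of_injective _ List.ofFn_injective]
  simp

/-- nonempty prefixes. -/
def pre {M : ℕ} (v : List (Alpha 2 M)) : Finset (Word 2 M) :=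
  (v.inits.toFinset).subtype (· ≠ [])

lemma mem_pre {M : ℕ} {v : List (Alpha 2 M)} {u : Word 2 M} : u ∈ pre v ↔ u.1 <+: v := by
  simp [pre]

lemma retained_iff {M : ℕ} {ω : PercSpace 2 M} {v : List (Alpha 2 M)} :
    Retained 2 M ω v ↔ ∀ w ∈ pre v, ω w = true := by
  constructor
  · intro h w hw
    exact h w.1 w.2 (mem_pre.1 hw)
  · intro h u hu hp
    exact h ⟨u, hu⟩ (mem_pre.2 hp)

/-- union of prefix sets. -/
def preL {M : ℕ} (l : List (List (Alpha 2 M))) : Finset (Word 2 M) :=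
  l.toFinset.biUnion pre

lemma mem_preL {M : ℕ} {l : List (List (Alpha 2 M))} {u : Word 2 M} :
    u ∈ preL l ↔ ∃ v ∈ l, u.1 <+: v := by
  simp [preL, mem_pre]

lemma preL_cons {M : ℕ} (v : List (Alpha 2 M)) (l : List (List (Alpha 2 M))) :
    preL (v :: l) = preL l ∪ pre v := by
  ext u
  simp [mem_preL, mem_pre, or_comm]

lemma pre_card_ge {M n m : ℕ} {l : List (List (Alpha 2 M))} {v : List (Alpha 2 M)}
    (hv : v.length = n) (hl : l ≠ []) (hmn : m ≤ n) (hm : ∀ v' ∈ l, v.take m = v'.take m) :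
    ∃ v' ∈ l, ∃ j ∈ Finset.Icc m n, v.take j = v'.take j ∧
      (preL l).card + (n - j) ≤ (preL (v :: l)).card := by
  classical
  let Q : ℕ → Prop := fun j => ∃ v' ∈ l, v.take j = v'.take j
  obtain ⟨v0, hv0⟩ := List.exists_mem_of_ne_nil l hl
  have hQm : Q m := ⟨v0, hv0, hm v0 hv0⟩
  let J := Nat.findGreatest Q n
  have hJm : m ≤ J := Nat.le_findGreatest hmn hQm
  have hJn : J ≤ n := Nat.findGreatest_le n
  obtain ⟨v', hv', hJ⟩ : Q J := Nat.findGreatest_spec hmn hQm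
  refine ⟨v', hv', J, Finset.mem_Icc.2 ⟨hJm, hJn⟩, hJ, ?_⟩
  have h1 : (preL (v :: l)) = preL l ∪ (pre v \ preL l) := by
    rw [preL_cons]; simp
  rw [h1, Finset.card_union_of_disjoint Finset.disjoint_sdiff]
  have h2 : Finset.Ioc J n ⊆ (pre v \ preL l).image (fun u => u.1.length) := by
    intro j hj
    rw [Finset.mem_Ioc] at hj
    have hlen : (v.take j).length = j := by rw [List.length_take, hv]; omega
    have hne : v.take j ≠ [] := by
      intro h; rw [h] at hlen; simp at hlen; omega
    refine Finset.mem_image.2 ⟨⟨v.take j, hne⟩, ?_, hlen⟩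
    rw [Finset.mem_sdiff, mem_pre, mem_preL]
    refine ⟨List.take_prefix _ _, ?_⟩
    rintro ⟨v'', hv'', hpf⟩
    have : Q j := ⟨v'', hv'', by
      have := List.prefix_iff_eq_take.1 hpf
      simp only at this
      rwa [hlen] at this⟩
    have := Nat.le_findGreatest hj.2 this
    omega
  have h3 := Finset.card_le_card h2
  have h4 := Finset.card_image_le (s := pre v \ preL l) (f := fun u => u.1.length)
  simp at h3
  omega

/-- Event that all labels in `S` are 1. -/
def onEv {M : ℕ} (S : Finset (Word 2 M)) : Set (PercSpace 2 M) := {ω | ∀ w ∈ S, ω w = true}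

lemma measurableSet_onEv {M : ℕ} (S : Finset (Word 2 M)) : MeasurableSet (onEv S) := by
  have : onEv S = ⋂ w ∈ S, {ω : PercSpace 2 M | ω w = true} := by
    ext ω; simp [onEv]
  rw [this]
  exact Finset.measurableSet_biInter _ (fun w _ => measurableSet_eq_fun (by fun_prop) (by fun_prop))

lemma prob_onEv {M : ℕ} {p : ℝ} {P : Measure (PercSpace 2 M)} (hP : IsBernoulliPerc 2 M p P)
    (S : Finset (Word 2 M)) : P (onEv S) = (ENNReal.ofReal p) ^ S.card := by
  have := hP.2 S (fun _ => true)
  simpa [onEv] using this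

lemma measurableSet_retained {M : ℕ} (v : List (Alpha 2 M)) :
    MeasurableSet {ω : PercSpace 2 M | Retained 2 M ω v} := by
  have : {ω : PercSpace 2 M | Retained 2 M ω v} = onEv (pre v) := by
    ext ω; exact retained_iff
  rw [this]; exact measurableSet_onEv _

/-- The counting variable: number of retained words in `T`. -/
def cnt {M : ℕ} (T : Finset (List (Alpha 2 M))) (ω : PercSpace 2 M) : ℕ := by
  classical exact (T.filter (fun v => Retained 2 M ω v)).card

lemma cnt_eq {M : ℕ} (T : Finset (List (Alpha 2 M))) (ω : PercSpace 2 M) :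
    (cnt T ω : ℝ≥0∞) = ∑ v ∈ T, (onEv (pre v)).indicator 1 ω := by
  classical
  simp only [cnt, Finset.card_filter, Nat.cast_sum]
  refine Finset.sum_congr rfl (fun v _ => ?_)
  by_cases h : Retained 2 M ω v
  · have h' : ω ∈ onEv (pre v) := retained_iff.1 h
    simp [h, h']
  · have h' : ω ∉ onEv (pre v) := fun h' => h (retained_iff.2 h')
    simp [h, h']

lemma measurable_cnt_enn {M : ℕ} (T : Finset (List (Alpha 2 M))) :
    Measurable (fun ω => (cnt T ω : ℝ≥0∞)) := by
  simp only [cnt_eq]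
  refine Finset.measurable_sum _ (fun v _ => ?_)
  exact measurable_one.indicator (measurableSet_onEv _)

lemma measurable_cnt {M : ℕ} (T : Finset (List (Alpha 2 M))) : Measurable (cnt T) := by
  have h := (measurable_cnt_enn T).ennreal_toReal
  simp only [ENNReal.toReal_natCast] at h
  have h2 := Nat.measurable_floor.comp h
  have h3 : (Nat.floor ∘ fun ω => (cnt T ω : ℝ)) = cnt T := by
    funext ω; simp
  rwa [h3] at h2

lemma card_pre {M : ℕ} (v : List (Alpha 2 M)) : (pre v).card = v.length := by
  apply le_antisymm
  · have h1 : (pre v).card ≤ (Finset.Ioc 0 v.length).card := by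
      refine Finset.card_le_card_of_injOn (fun u => u.1.length) ?_ ?_
      · intro u hu
        have := (mem_pre.1 hu).length_le
        have h0 := List.length_pos_iff.2 u.2
        simp; omega
      · intro u hu u' hu' h
        apply Subtype.ext
        have h1 := List.prefix_iff_eq_take.1 (mem_pre.1 hu)
        have h2 := List.prefix_iff_eq_take.1 (mem_pre.1 hu')
        simp only at h
        rw [h1, h2, h]
    simpa using h1
  · have h2 : Finset.Ioc 0 v.length ⊆ (pre v).image (fun u => u.1.length) := by
      intro j hj
      rw [Finset.mem_Ioc] at hj
      have hlen : (v.take j).length = j := by rw [List.length_take]; omega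
      have hne : v.take j ≠ [] := by
        intro h; rw [h] at hlen; simp at hlen; omega
      exact Finset.mem_image.2 ⟨⟨v.take j, hne⟩, mem_pre.2 (List.take_prefix _ _), hlen⟩
    have h3 := Finset.card_le_card h2
    have h4 := Finset.card_image_le (s := pre v) (f := fun u => u.1.length)
    simp at h3
    omega

lemma lintegral_cnt {M n : ℕ} {p : ℝ} {P : Measure (PercSpace 2 M)} (hP : IsBernoulliPerc 2 M p P)
    (T : Finset (List (Alpha 2 M))) (hT : ∀ v ∈ T, v.length = n) :
    ∫⁻ ω, (cnt T ω : ℝ≥0∞) ∂P = T.card * (ENNReal.ofReal p) ^ n := by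
  simp only [cnt_eq]
  rw [lintegral_finsetSum _ (fun v _ => measurable_one.indicator (measurableSet_onEv _))]
  rw [Finset.sum_congr rfl (g := fun _ => (ENNReal.ofReal p) ^ n), Finset.sum_const, nsmul_eq_mul]
  intro v hv
  rw [lintegral_indicator_one (measurableSet_onEv _), prob_onEv hP]
  congr 1
  rw [card_pre, hT v hv]

/-- Number of words in `T` agreeing with a word up to level `j`. -/
def agr {M : ℕ} (T : Finset (List (Alpha 2 M))) (v' : List (Alpha 2 M)) (j : ℕ) : ℕ :=
  (T.filter (fun v => v.take j = v'.take j)).card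

lemma moment_step {M n m : ℕ} {q R : ℝ≥0∞} (hq : q ≤ 1)
    (T : Finset (List (Alpha 2 M))) (hT : ∀ v ∈ T, v.length = n) (hmn : m ≤ n)
    (hTm : ∀ v ∈ T, ∀ v' ∈ T, v.take m = v'.take m)
    (hR : ∀ v' ∈ T, ∑ j ∈ Finset.Icc m n, q ^ (n - j) * (agr T v' j : ℝ≥0∞) ≤ R)
    (l : List (List (Alpha 2 M))) (hl : ∀ v ∈ l, v ∈ T) :
    ∑ v ∈ T, q ^ (preL (v :: l)).card ≤ q ^ (preL l).card * ((l.length + 1) * R) := by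
  classical
  by_cases hl0 : l = []
  · subst hl0
    rcases T.eq_empty_or_nonempty with rfl | ⟨v', hv'⟩
    · simp
    · have h1 : preL ([] : List (List (Alpha 2 M))) = ∅ := by simp [preL]
      have h2 : ∀ v ∈ T, q ^ (preL [v]).card = q ^ n := by
        intro v hv
        rw [preL_cons, h1, Finset.empty_union, card_pre, hT v hv]
      rw [Finset.sum_congr rfl h2, h1]
      simp only [Finset.sum_const, nsmul_eq_mul, Finset.card_empty, pow_zero, one_mul, List.length_nil,
        Nat.cast_zero, zero_add]
      refine le_trans ?_ (hR v' hv')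
      refine le_trans ?_ (Finset.single_le_sum (f := fun j => q ^ (n - j) * (agr T v' j : ℝ≥0∞))
        (fun _ _ => zero_le) (Finset.mem_Icc.2 ⟨le_refl m, hmn⟩))
      have h3 : agr T v' m = T.card := by
        rw [agr, Finset.filter_true_of_mem (fun v hv => hTm v hv v' hv')]
      simp only [h3]
      rw [mul_comm]
      gcongr ?_ * _
      exact pow_le_pow_right_of_le_one' hq (Nat.sub_le _ _)
  · have h1 : ∀ v ∈ T, q ^ (preL (v :: l)).card ≤ q ^ (preL l).card *
        ∑ v' ∈ l.toFinset, ∑ j ∈ Finset.Icc m n, if v.take j = v'.take j then q ^ (n - j) else 0 := by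
      intro v hv
      obtain ⟨v', hv', j, hj, hjv, hc⟩ := pre_card_ge (hT v hv) hl0 hmn
        (fun v' hv' => hTm v hv v' (hl v' hv'))
      calc q ^ (preL (v :: l)).card ≤ q ^ ((preL l).card + (n - j)) := pow_le_pow_right_of_le_one' hq hc
        _ = q ^ (preL l).card * q ^ (n - j) := pow_add _ _ _
        _ ≤ _ := by
          gcongr
          refine le_trans ?_ (Finset.single_le_sum (f := fun v' => ∑ j ∈ Finset.Icc m n, if v.take j = v'.take j then q ^ (n - j) else 0)
            (fun _ _ => zero_le) (List.mem_toFinset.2 hv'))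
          refine le_trans ?_ (Finset.single_le_sum (f := fun j => if v.take j = v'.take j then q ^ (n - j) else 0)
            (fun _ _ => zero_le) hj)
          simp [hjv]
    refine (Finset.sum_le_sum h1).trans ?_
    rw [← Finset.mul_sum]
    gcongr
    rw [Finset.sum_comm]
    have h2 : ∀ v' ∈ l.toFinset, ∑ v ∈ T, ∑ j ∈ Finset.Icc m n, (if v.take j = v'.take j then q ^ (n - j) else 0) ≤ R := by
      intro v' hv'
      rw [Finset.sum_comm]
      refine le_trans (le_of_eq ?_) (hR v' (hl v' (List.mem_toFinset.1 hv')))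
      refine Finset.sum_congr rfl (fun j _ => ?_)
      rw [← Finset.sum_filter, Finset.sum_const, nsmul_eq_mul, mul_comm, agr]
    refine (Finset.sum_le_sum h2).trans ?_
    rw [Finset.sum_const, nsmul_eq_mul]
    gcongr
    refine le_trans ?_ le_self_add
    exact_mod_cast List.toFinset_card_le l

lemma moment_gen {M n m : ℕ} {p : ℝ} {R : ℝ≥0∞} (hp1 : p ≤ 1)
    {P : Measure (PercSpace 2 M)} (hP : IsBernoulliPerc 2 M p P)
    (T : Finset (List (Alpha 2 M))) (hT : ∀ v ∈ T, v.length = n) (hmn : m ≤ n)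
    (hTm : ∀ v ∈ T, ∀ v' ∈ T, v.take m = v'.take m)
    (hR : ∀ v' ∈ T, ∑ j ∈ Finset.Icc m n, (ENNReal.ofReal p) ^ (n - j) * (agr T v' j : ℝ≥0∞) ≤ R)
    (k : ℕ) :
    ∀ l : List (List (Alpha 2 M)), (∀ v ∈ l, v ∈ T) →
    ∫⁻ ω, (onEv (preL l)).indicator 1 ω * (cnt T ω : ℝ≥0∞) ^ k ∂P ≤
      (ENNReal.ofReal p) ^ (preL l).card * ((l.length + k) * R) ^ k := by
  have hq : ENNReal.ofReal p ≤ 1 := by simpa using hp1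
  induction k with
  | zero =>
    intro l hl
    simp only [pow_zero, mul_one]
    rw [lintegral_indicator_one (measurableSet_onEv _), prob_onEv hP]
  | succ k ih =>
    intro l hl
    have h1 : ∀ ω, (onEv (preL l)).indicator 1 ω * (cnt T ω : ℝ≥0∞) ^ (k + 1) =
        ∑ v ∈ T, (onEv (preL (v :: l))).indicator 1 ω * (cnt T ω : ℝ≥0∞) ^ k := by
      intro ω
      rw [pow_succ', ← mul_assoc, ← Finset.sum_mul]
      congr 1
      rw [cnt_eq, Finset.mul_sum]
      refine Finset.sum_congr rfl (fun v _ => ?_)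
      have : onEv (preL (v :: l)) = onEv (preL l) ∩ onEv (pre v) := by
        ext ω
        simp only [onEv, preL_cons, Finset.mem_union, Set.mem_inter_iff, mem_ofPred_eq]
        constructor
        · intro h
          exact ⟨fun w hw => h w (Or.inl hw), fun w hw => h w (Or.inr hw)⟩
        · rintro ⟨h1, h2⟩ w (hw | hw)
          · exact h1 w hw
          · exact h2 w hw
      rw [this, Set.inter_indicator_one]
      rfl
    simp_rw [h1]
    have hme : ∀ v ∈ T, Measurable (fun ω => (onEv (preL (v :: l))).indicator 1 ω * (cnt T ω : ℝ≥0∞) ^ k) :=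
      fun v _ => (measurable_one.indicator (measurableSet_onEv _)).mul ((measurable_cnt_enn T).pow_const k)
    rw [lintegral_finsetSum _ hme]
    have h2 : ∀ v ∈ T, ∫⁻ ω, (onEv (preL (v :: l))).indicator 1 ω * (cnt T ω : ℝ≥0∞) ^ k ∂P ≤
        (ENNReal.ofReal p) ^ (preL (v :: l)).card * ((l.length + (k + 1 : ℕ)) * R) ^ k := by
      intro v hv
      refine (ih (v :: l) ?_).trans (le_of_eq ?_)
      · intro w hw
        rcases List.mem_cons.1 hw with rfl | hw
        · exact hv
        · exact hl w hw
      · congr 3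
        simp only [List.length_cons]
        push_cast
        ring
    refine (Finset.sum_le_sum h2).trans ?_
    rw [← Finset.sum_mul]
    refine (mul_le_mul_left (moment_step hq T hT hmn hTm hR l hl) _).trans ?_
    rw [pow_succ', mul_assoc]
    gcongr
    push_cast
    exact le_add_self

/-- Markov with `k`-th moments. -/
lemma tail_bound {M n m : ℕ} {p R x : ℝ} (hp0 : 0 < p) (hp1 : p ≤ 1) (hx : 0 < x) (hR0 : 0 ≤ R)
    {P : Measure (PercSpace 2 M)} (hP : IsBernoulliPerc 2 M p P)
    (T : Finset (List (Alpha 2 M))) (hT : ∀ v ∈ T, v.length = n) (hmn : m ≤ n)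
    (hTm : ∀ v ∈ T, ∀ v' ∈ T, v.take m = v'.take m)
    (hR : ∀ v' ∈ T, ∑ j ∈ Finset.Icc m n, p ^ (n - j) * (agr T v' j : ℝ) ≤ R)
    (k : ℕ) : 
    (∫⁻ ω, (cnt T ω : ℝ≥0∞) ^ k ∂P ≤ ENNReal.ofReal ((k * R) ^ k)) ∧
    P {ω | x ≤ cnt T ω} ≤ ENNReal.ofReal ((k * R / x) ^ k) := by
  have hR' : ∀ v' ∈ T, ∑ j ∈ Finset.Icc m n, (ENNReal.ofReal p) ^ (n - j) * (agr T v' j : ℝ≥0∞) ≤ ENNReal.ofReal R := by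
    intro v' hv'
    refine le_trans (le_of_eq ?_) (ENNReal.ofReal_le_ofReal (hR v' hv'))
    rw [ENNReal.ofReal_sum_of_nonneg (fun j _ => by positivity)]
    refine Finset.sum_congr rfl (fun j _ => ?_)
    rw [ENNReal.ofReal_mul (by positivity), ENNReal.ofReal_pow hp0.le, ENNReal.ofReal_natCast]
  have h := moment_gen hp1 hP T hT hmn hTm hR' k [] (by simp)
  have h1 : preL ([] : List (List (Alpha 2 M))) = ∅ := by simp [preL]
  have h2 : onEv (∅ : Finset (Word 2 M)) = univ := by ext; simp [onEv]
  simp only [h1, h2, indicator_univ, Pi.one_apply, one_mul, Finset.card_empty, pow_zero, List.length_nil,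
    Nat.cast_zero, zero_add] at h
  have h3 : ∫⁻ ω, (cnt T ω : ℝ≥0∞) ^ k ∂P ≤ ENNReal.ofReal ((k * R) ^ k) := by
    rwa [ENNReal.ofReal_pow (by positivity), ENNReal.ofReal_mul (by positivity), ENNReal.ofReal_natCast]
  refine ⟨h3, ?_⟩
  have h4 := mul_meas_ge_le_lintegral (μ := P) ((measurable_cnt_enn T).pow_const k) (ENNReal.ofReal x ^ k)
  have h5 : {ω | x ≤ cnt T ω} ⊆ {ω | ENNReal.ofReal x ^ k ≤ (cnt T ω : ℝ≥0∞) ^ k} := by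
    intro ω hω
    simp only [mem_ofPred_eq] at hω ⊢
    gcongr
    rw [← ENNReal.ofReal_natCast]
    exact ENNReal.ofReal_le_ofReal hω
  have hx0 : ENNReal.ofReal x ^ k ≠ 0 := by
    apply pow_ne_zero; simpa using hx
  have hxt : ENNReal.ofReal x ^ k ≠ ∞ := by simp
  rw [div_pow, ENNReal.ofReal_div_of_pos (by positivity), ENNReal.le_div_iff_mul_le (by left; simp [hx]) (by left; simp), mul_comm,
    ENNReal.ofReal_pow hx.le]
  calc _ ≤ ENNReal.ofReal x ^ k * P {ω | ENNReal.ofReal x ^ k ≤ (cnt T ω : ℝ≥0∞) ^ k} := by gcongr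
    _ ≤ _ := h4.trans h3

/-- Integer coordinates of the cube of a word. -/
def nco (M : ℕ) : List (Alpha 2 M) → Fin 2 → ℕ
  | [], _ => 0
  | c :: w, i => (c i : ℕ) * M ^ w.length + nco M w i

lemma nco_lt {M : ℕ} (w : List (Alpha 2 M)) (i : Fin 2) : nco M w i < M ^ w.length := by
  induction w with
  | nil => simp [nco]
  | cons c w ih =>
    simp only [nco, List.length_cons, pow_succ]
    have := (c i).2
    nlinarith

lemma nco_append {M : ℕ} (u v : List (Alpha 2 M)) (i : Fin 2) :
    nco M (u ++ v) i = nco M u i * M ^ v.length + nco M v i := by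
  induction u with
  | nil => simp [nco]
  | cons c w ih =>
    simp only [List.cons_append, nco, ih, List.length_append, pow_add]
    ring

lemma nco_inj {M : ℕ} (w : List (Alpha 2 M)) : ∀ w' : List (Alpha 2 M), w.length = w'.length →
    (∀ i, nco M w i = nco M w' i) → w = w' := by
  induction w with
  | nil =>
    intro w' h _
    exact (List.length_eq_zero_iff.1 h.symm).symm
  | cons c w ih =>
    intro w' h h2
    cases w' with
    | nil => simp at h
    | cons c' w' =>
      have hl : w.length = w'.length := by simpa using h
      have key : ∀ i, (c i : ℕ) = c' i ∧ nco M w i = nco M w' i := by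
        intro i
        have h3 := h2 i
        simp only [nco] at h3
        have h4 := nco_lt w i
        have h5 := nco_lt w' i
        rw [hl] at h3 h4
        have hpos : 0 < M ^ w'.length := by omega
        have h6 : ((c i : ℕ) * M ^ w'.length + nco M w i) / M ^ w'.length = c i := by
          rw [mul_comm, Nat.mul_add_div hpos, Nat.div_eq_of_lt h4]; simp
        have h7 : ((c' i : ℕ) * M ^ w'.length + nco M w' i) / M ^ w'.length = c' i := by
          rw [mul_comm, Nat.mul_add_div hpos, Nat.div_eq_of_lt h5]; simp
        have h8 : (c i : ℕ) = c' i := by rw [← h6, ← h7, h3]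
        refine ⟨h8, ?_⟩
        rw [h8] at h3
        omega
      have h9 : c = c' := funext fun i => Fin.ext (key i).1
      rw [h9, ih w' hl (fun i => (key i).2)]

lemma wordBase_cons {M : ℕ} (hM : 2 ≤ M) (c : Alpha 2 M) (w : List (Alpha 2 M)) (i : Fin 2) :
    wordBase 2 M (c :: w) i = ((c i : ℕ) : ℝ) / M + wordBase 2 M w i / M := by
  have hM0 : (M : ℝ) ≠ 0 := by positivity
  unfold wordBase
  rw [show (∑ j : Fin (c :: w).length, (((c :: w).get j) i : ℝ) * (M : ℝ) ^ (-(j : ℤ) - 1)) =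
    ∑ j : Fin (w.length + 1), (((c :: w).get j) i : ℝ) * (M : ℝ) ^ (-(j : ℤ) - 1) from rfl]
  rw [Fin.sum_univ_succ, Finset.sum_div]
  congr 1
  · simp [div_eq_mul_inv]
    left; rfl
  · refine Finset.sum_congr rfl (fun j _ => ?_)
    have : (M : ℝ) ^ (-((j.succ : ℕ) : ℤ) - 1) = (M : ℝ) ^ (-(j : ℤ) - 1) / M := by
      rw [eq_div_iff hM0, ← zpow_add_one₀ hM0]
      congr 1
      simp
      ring
    rw [show (((j.succ : Fin (w.length + 1)) : ℕ) : ℤ) = ((j.succ : ℕ) : ℤ) from rfl, this]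
    simp
    ring

lemma wordBase_eq {M : ℕ} (hM : 2 ≤ M) (w : List (Alpha 2 M)) (i : Fin 2) :
    wordBase 2 M w i = (nco M w i : ℝ) / (M : ℝ) ^ w.length := by
  have hM0 : (M : ℝ) ≠ 0 := by positivity
  induction w with
  | nil => simp [wordBase, nco]
  | cons c w ih =>
    rw [wordBase_cons hM, ih]
    simp only [nco, List.length_cons]
    push_cast
    field_simp
    ring

/-- Words of length `n` extending `u`. -/
def desc (M n : ℕ) (u : List (Alpha 2 M)) : Finset (List (Alpha 2 M)) :=
  (words M n).filter (fun v => v.take u.length = u)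

lemma card_agree_le {M n j : ℕ} (u : List (Alpha 2 M)) :
    ((words M n).filter (fun v => v.take j = u)).card ≤ (M ^ 2) ^ (n - j) := by
  rw [← card_words]
  refine Finset.card_le_card_of_injOn (fun v => v.drop j) ?_ ?_
  · intro v hv
    simp only [Finset.coe_filter, mem_words, mem_ofPred_eq] at hv
    simp only [Finset.mem_coe, mem_words, List.length_drop, hv.1]
  · intro v hv v' hv' h
    simp only [Finset.coe_filter, mem_words, mem_ofPred_eq] at hv hv'
    rw [← List.take_append_drop j v, ← List.take_append_drop j v', hv.2, hv'.2]
    simp only at h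
    rw [h]

lemma desc_R {M n : ℕ} {p : ℝ} (hp0 : 0 < p) (hb : 1 < (M : ℝ) ^ 2 * p) (u : List (Alpha 2 M))
    (hu : u.length ≤ n) (v' : List (Alpha 2 M)) :
    ∑ j ∈ Finset.Icc u.length n, p ^ (n - j) * (agr (desc M n u) v' j : ℝ) ≤
      ((M : ℝ) ^ 2 * p / ((M : ℝ) ^ 2 * p - 1)) * ((M : ℝ) ^ 2 * p) ^ (n - u.length) := by
  set b := (M : ℝ) ^ 2 * p with hbdef
  have h1 : ∀ j ∈ Finset.Icc u.length n, p ^ (n - j) * (agr (desc M n u) v' j : ℝ) ≤ b ^ (n - j) := by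
    intro j hj
    rw [Finset.mem_Icc] at hj
    have h2 : agr (desc M n u) v' j ≤ (M ^ 2) ^ (n - j) := by
      refine le_trans (Finset.card_le_card ?_) (card_agree_le (v'.take j))
      intro v hv
      simp only [desc, Finset.mem_filter] at hv ⊢
      exact ⟨hv.1.1, hv.2⟩
    have h3 : (agr (desc M n u) v' j : ℝ) ≤ ((M : ℝ) ^ 2) ^ (n - j) := by exact_mod_cast h2
    calc _ ≤ p ^ (n - j) * ((M : ℝ) ^ 2) ^ (n - j) := by gcongr
      _ = b ^ (n - j) := by rw [hbdef, mul_pow]; ring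
  refine (Finset.sum_le_sum h1).trans ?_
  have h4 : ∑ j ∈ Finset.Icc u.length n, b ^ (n - j) = ∑ i ∈ Finset.range (n - u.length + 1), b ^ i := by
    refine Finset.sum_nbij' (fun j => n - j) (fun i => n - i) ?_ ?_ ?_ ?_ ?_
    · intro j hj; simp at hj ⊢; omega
    · intro j hj; simp at hj ⊢; omega
    · intro j hj; simp at hj ⊢; omega
    · intro j hj; simp at hj ⊢; omega
    · intro j hj; rfl
  rw [h4, geom_sum_eq hb.ne', div_mul_eq_mul_div]
  have hb1 : 0 < b - 1 := by linarith
  gcongr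
  rw [pow_succ]
  linarith

/-- Words of length `n` whose cubes lie near a discretized line. -/
def strip (M n : ℕ) (i j : Fin 2) (A B : ℤ) : Finset (List (Alpha 2 M)) :=
  (words M n).filter (fun w => |(nco M w i : ℤ) * (M : ℤ) ^ n - A * nco M w j - B * (M : ℤ) ^ n| ≤ 5 * (M : ℤ) ^ n)

lemma strip_agree {M n k : ℕ} (hM : 2 ≤ M) (hk : k ≤ n) (i j : Fin 2) (hij : i ≠ j) (A B : ℤ)
    (v' : List (Alpha 2 M)) (hv' : v'.length = n) :
    agr (strip M n i j A B) v' k ≤ 11 * M ^ (n - k) := by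
  classical
  have hMn : (0 : ℤ) < (M : ℤ) ^ n := by positivity
  set S := (strip M n i j A B).filter (fun v => v.take k = v'.take k) with hS
  set u := v'.take k with hu
  have hul : u.length = k := by rw [hu, List.length_take]; omega
  have h1 : S.card ≤ 11 * (S.image (fun v => nco M v j)).card := by
    apply Finset.card_le_mul_card_image
    intro x _
    -- fiber
    set C : ℤ := A * x + B * (M : ℤ) ^ n with hC
    have h2 : (S.filter (fun v => nco M v j = x)).card ≤ (Finset.Icc (-((5 * (M : ℤ) ^ n - C) / (M : ℤ) ^ n)) ((5 * (M : ℤ) ^ n + C) / (M : ℤ) ^ n)).card := by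
      refine Finset.card_le_card_of_injOn (fun v => (nco M v i : ℤ)) ?_ ?_
      · intro v hv
        simp only [hS, strip, Finset.coe_filter, Finset.mem_filter, mem_ofPred_eq] at hv
        obtain ⟨⟨⟨_, h3⟩, _⟩, h4⟩ := hv
        rw [h4, abs_le] at h3
        simp only [Finset.coe_Icc, Set.mem_Icc]
        constructor
        · rw [neg_le, Int.le_ediv_iff_mul_le hMn]
          rw [hC]; linarith
        · rw [Int.le_ediv_iff_mul_le hMn]
          rw [hC]; linarith
      · intro v hv w hw h
        simp only [hS, strip, Finset.coe_filter, Finset.mem_filter, mem_ofPred_eq, mem_words] at hv hw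
        simp only [Nat.cast_inj] at h
        refine nco_inj v w (by rw [hv.1.1.1, hw.1.1.1]) (fun i' => ?_)
        have : i' = i ∨ i' = j := by omega
        rcases this with rfl | rfl
        · exact h
        · rw [hv.2, hw.2]
    refine h2.trans ?_
    rw [Int.card_Icc]
    have h5 : (5 * (M : ℤ) ^ n + C) / (M : ℤ) ^ n = 5 + C / (M : ℤ) ^ n := by
      rw [add_comm, Int.add_mul_ediv_right _ _ hMn.ne']; ring
    have h6 : (5 * (M : ℤ) ^ n - C) / (M : ℤ) ^ n = 5 + (-C) / (M : ℤ) ^ n := by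
      rw [sub_eq_add_neg, add_comm, Int.add_mul_ediv_right _ _ hMn.ne']; ring
    rw [h5, h6]
    have h7 : (-C) / (M : ℤ) ^ n + C / (M : ℤ) ^ n ≤ 0 := by
      have e1 := Int.ediv_mul_le (-C) hMn.ne'
      have e2 := Int.ediv_mul_le C hMn.ne'
      by_contra hcon
      push Not at hcon
      nlinarith
    omega
  refine h1.trans ?_
  gcongr
  have h8 : (S.image (fun v => nco M v j)) ⊆ (Finset.range (M ^ (n - k))).image (fun y => nco M u j * M ^ (n - k) + y) := by
    intro x hx
    obtain ⟨v, hv, rfl⟩ := Finset.mem_image.1 hx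
    simp only [hS, strip, Finset.mem_filter, mem_words] at hv
    refine Finset.mem_image.2 ⟨nco M (v.drop k) j, ?_, ?_⟩
    · have := nco_lt (v.drop k) j
      rw [List.length_drop, hv.1.1] at this
      exact Finset.mem_range.2 this
    · rw [← hv.2]
      conv_rhs => rw [← List.take_append_drop k v, nco_append, List.length_drop, hv.1.1]
  refine (Finset.card_le_card h8).trans (Finset.card_image_le.trans ?_)
  simp

lemma strip_R {M n : ℕ} {p : ℝ} (hM : 2 ≤ M) (hp0 : 0 < p) (i j : Fin 2) (hij : i ≠ j) (A B : ℤ)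
    (v' : List (Alpha 2 M)) (hv' : v'.length = n) :
    ∑ k ∈ Finset.Icc 0 n, p ^ (n - k) * (agr (strip M n i j A B) v' k : ℝ) ≤
      11 * (n + 1) * (max 1 ((M : ℝ) * p)) ^ n := by
  set κ := max 1 ((M : ℝ) * p) with hκ
  have hκ1 : 1 ≤ κ := le_max_left _ _
  have h1 : ∀ k ∈ Finset.Icc 0 n, p ^ (n - k) * (agr (strip M n i j A B) v' k : ℝ) ≤ 11 * κ ^ n := by
    intro k hk
    have h2 : (agr (strip M n i j A B) v' k : ℝ) ≤ 11 * (M : ℝ) ^ (n - k) := by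
      exact_mod_cast strip_agree hM (Finset.mem_Icc.1 hk).2 i j hij A B v' hv'
    calc _ ≤ p ^ (n - k) * (11 * (M : ℝ) ^ (n - k)) := by gcongr
      _ = 11 * ((M : ℝ) * p) ^ (n - k) := by rw [mul_pow]; ring
      _ ≤ 11 * κ ^ (n - k) := by gcongr; exact le_max_right _ _
      _ ≤ 11 * κ ^ n := by exact mul_le_mul_of_nonneg_left (pow_le_pow_right₀ hκ1 (Nat.sub_le _ _)) (by norm_num)
  refine (Finset.sum_le_sum h1).trans ?_
  rw [Finset.sum_const, nsmul_eq_mul]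
  simp
  apply le_of_eq; ring

lemma desc_length {M n : ℕ} {u v : List (Alpha 2 M)} (h : v ∈ desc M n u) : v.length = n :=
  mem_words.1 (Finset.mem_filter.1 h).1

lemma desc_nil (M n : ℕ) : desc M n [] = words M n := by
  simp [desc]

lemma desc_tail {M n : ℕ} {p x : ℝ} (hp0 : 0 < p) (hp1 : p ≤ 1) (hb : 1 < (M : ℝ) ^ 2 * p) (hx : 0 < x)
    {P : Measure (PercSpace 2 M)} (hP : IsBernoulliPerc 2 M p P) (u : List (Alpha 2 M))
    (hu : u.length ≤ n) (k : ℕ) :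
    (∫⁻ ω, (cnt (desc M n u) ω : ℝ≥0∞) ^ k ∂P ≤ ENNReal.ofReal ((k * (((M : ℝ) ^ 2 * p / ((M : ℝ) ^ 2 * p - 1)) * ((M : ℝ) ^ 2 * p) ^ (n - u.length))) ^ k)) ∧
    P {ω | x ≤ cnt (desc M n u) ω} ≤ ENNReal.ofReal ((k * (((M : ℝ) ^ 2 * p / ((M : ℝ) ^ 2 * p - 1)) * ((M : ℝ) ^ 2 * p) ^ (n - u.length)) / x) ^ k) := by
  have h1 : 0 < (M : ℝ) ^ 2 * p - 1 := by linarith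
  refine tail_bound (m := u.length) hp0 hp1 hx (by positivity) hP _ (fun v hv => desc_length hv) hu ?_ (fun v' _ => desc_R hp0 hb u hu v') k
  intro v hv v' hv'
  rw [(Finset.mem_filter.1 hv).2, (Finset.mem_filter.1 hv').2]

lemma strip_tail {M n : ℕ} {p x : ℝ} (hM : 2 ≤ M) (hp0 : 0 < p) (hp1 : p ≤ 1) (hx : 0 < x)
    {P : Measure (PercSpace 2 M)} (hP : IsBernoulliPerc 2 M p P) (i j : Fin 2) (hij : i ≠ j) (A B : ℤ) (k : ℕ) :
    P {ω | x ≤ cnt (strip M n i j A B) ω} ≤ ENNReal.ofReal ((k * (11 * (n + 1) * (max 1 ((M : ℝ) * p)) ^ n) / x) ^ k) := by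
  have hl : ∀ v ∈ strip M n i j A B, v.length = n := fun v hv => mem_words.1 (Finset.mem_filter.1 hv).1
  refine (tail_bound (m := 0) hp0 hp1 hx (by positivity) hP _ hl (Nat.zero_le n) (by simp) 
    (fun v' hv' => strip_R hM hp0 i j hij A B v' (hl v' hv')) k).2

lemma pz {M : ℕ} {p : ℝ} (hp0 : 0 < p) (hp1 : p ≤ 1) (hb : 1 < (M : ℝ) ^ 2 * p)
    {P : Measure (PercSpace 2 M)} (hP : IsBernoulliPerc 2 M p P) :
    ∃ δ : ℝ, 0 < δ ∧ ∀ n, ENNReal.ofReal δ ≤ P {ω | ((M : ℝ) ^ 2 * p) ^ n / 2 ≤ cnt (words M n) ω} := by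
  have := hP.1
  set b := (M : ℝ) ^ 2 * p with hbd
  have hb1 : 0 < b - 1 := by linarith
  set C := b / (b - 1) with hC
  have hC0 : 0 < C := by positivity
  refine ⟨1 / (64 * C ^ 2), by positivity, fun n => ?_⟩
  have hbn : 0 < b ^ n := by positivity
  obtain ⟨L, hL⟩ : ∃ L, L = 16 * C ^ 2 * b ^ n := ⟨_, rfl⟩
  have hL0 : 0 < L := by rw [hL]; positivity
  set G := {ω | b ^ n / 2 ≤ cnt (words M n) ω} with hG
  have hGm : MeasurableSet G := by
    refine measurableSet_le measurable_const ?_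
    exact measurable_from_top.comp (measurable_cnt _)
  have h1 : ∫⁻ ω, (cnt (words M n) ω : ℝ≥0∞) ∂P = ENNReal.ofReal (b ^ n) := by
    rw [lintegral_cnt hP _ (fun v hv => mem_words.1 hv), card_words, hbd, mul_pow, ENNReal.ofReal_mul (by positivity),
      ENNReal.ofReal_pow hp0.le]
    congr 1
    rw [← ENNReal.ofReal_natCast]
    push_cast
    rfl
  have h2 := (desc_tail (n := n) hp0 hp1 hb one_pos hP [] (by simp) 2).1
  rw [desc_nil] at h2
  simp only [List.length_nil, Nat.sub_zero] at h2
  rw [← hbd, ← hC] at h2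
  have h3 : ∀ ω, (cnt (words M n) ω : ℝ≥0∞) ≤ ENNReal.ofReal (b ^ n / 2) + ENNReal.ofReal L * G.indicator 1 ω
      + ENNReal.ofReal (1 / L) * (cnt (words M n) ω : ℝ≥0∞) ^ 2 := by
    intro ω
    have hr : (cnt (words M n) ω : ℝ) ≤ b ^ n / 2 + L * G.indicator 1 ω + 1 / L * (cnt (words M n) ω : ℝ) ^ 2 := by
      set N := (cnt (words M n) ω : ℝ) with hN
      have hN0 : 0 ≤ N := by positivity
      by_cases hω : ω ∈ G
      · simp only [hω, indicator_of_mem, Pi.one_apply, mul_one]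
        rcases le_total N L with h | h
        · have : 0 ≤ 1 / L * N ^ 2 := by positivity
          linarith
        · have : N ≤ 1 / L * N ^ 2 := by
            rw [one_div, ← div_eq_inv_mul, le_div_iff₀ hL0]; nlinarith
          linarith
      · simp only [hω, not_false_eq_true, indicator_of_notMem, mul_zero, add_zero]
        have h4 : N < b ^ n / 2 := by
          by_contra hcon; exact hω (not_lt.1 hcon)
        have : 0 ≤ 1 / L * N ^ 2 := by positivity
        linarith
    have h0 : 0 ≤ (G.indicator 1 ω : ℝ) := indicator_nonneg (fun _ _ => zero_le_one) _
    have hh := ENNReal.ofReal_le_ofReal hr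
    rw [ENNReal.ofReal_add (by positivity) (by positivity), ENNReal.ofReal_add (by positivity) (by positivity),
      ENNReal.ofReal_mul (p := L) hL0.le, ENNReal.ofReal_mul (p := 1 / L) (by positivity), ENNReal.ofReal_pow (p := (cnt (words M n) ω : ℝ)) (by positivity), ENNReal.ofReal_natCast] at hh
    convert hh using 4
    by_cases hω : ω ∈ G <;> simp [hω]
  have h4 := lintegral_mono (μ := P) h3
  rw [h1, lintegral_add_right _ (((measurable_cnt_enn _).pow_const 2).const_mul _),
    lintegral_add_right _ ((measurable_one.indicator hGm).const_mul _), lintegral_const,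
    lintegral_const_mul _ (measurable_one.indicator hGm), lintegral_indicator_one hGm,
    lintegral_const_mul _ ((measurable_cnt_enn _).pow_const 2), measure_univ, mul_one] at h4
  have h5 : ENNReal.ofReal (b ^ n) ≤ ENNReal.ofReal (b ^ n / 2) + ENNReal.ofReal L * P G + ENNReal.ofReal (b ^ n / 4) := by
    refine h4.trans ?_
    gcongr
    refine (mul_le_mul_right h2 _).trans ?_
    rw [← ENNReal.ofReal_mul (by positivity)]
    apply ENNReal.ofReal_le_ofReal
    apply le_of_eq
    rw [hL]; push_cast; field_simp; norm_num
  have hPG : P G = ENNReal.ofReal (P.real G) := by simp [Measure.real]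
  rw [hPG] at h5 ⊢
  have hn : 0 ≤ P.real G := measureReal_nonneg
  rw [← ENNReal.ofReal_mul hL0.le, ← ENNReal.ofReal_add (by positivity) (by positivity), ← ENNReal.ofReal_add (by positivity) (by positivity),
    ENNReal.ofReal_le_ofReal_iff (by positivity)] at h5
  apply ENNReal.ofReal_le_ofReal
  rw [div_le_iff₀ (by positivity)]
  have h6 : b ^ n / 4 ≤ 16 * C ^ 2 * P.real G * b ^ n := by rw [hL] at h5; nlinarith
  have h7 : 1 / 4 ≤ 16 * C ^ 2 * P.real G := by
    by_contra hcon
    push Not at hcon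
    have := mul_lt_mul_of_pos_right hcon hbn
    linarith
  linarith

/-- The good event at level `n`. -/
def good (M : ℕ) (p θ : ℝ) (m0 n : ℕ) : Set (PercSpace 2 M) :=
  {ω | ((M : ℝ) ^ 2 * p) ^ n / 2 ≤ cnt (words M n) ω} ∩
  ⋂ m ∈ Finset.Icc m0 n, ((⋂ u ∈ words M m,
      {ω | (cnt (desc M n u) ω : ℝ) < θ ^ m * ((M : ℝ) ^ 2 * p) ^ (n - m)}) ∩
    ⋂ x ∈ (({(0, 1), (1, 0)} : Finset (Fin 2 × Fin 2)) ×ˢ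
        (Finset.Icc (-(M : ℤ) ^ m) ((M : ℤ) ^ m) ×ˢ Finset.Icc (-4 * (M : ℤ) ^ m) (4 * (M : ℤ) ^ m))),
      {ω | (cnt (strip M m x.1.1 x.1.2 x.2.1 x.2.2) ω : ℝ) < 11 * (m + 1) * (θ * max 1 ((M : ℝ) * p)) ^ m})

lemma measurableSet_good (M : ℕ) (p θ : ℝ) (m0 n : ℕ) : MeasurableSet (good M p θ m0 n) := by
  have hm : ∀ T : Finset (List (Alpha 2 M)), Measurable (fun ω => (cnt T ω : ℝ)) := fun T =>
    measurable_from_top.comp (measurable_cnt T)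
  refine (measurableSet_le measurable_const (hm _)).inter ?_
  refine Finset.measurableSet_biInter _ (fun m _ => ?_)
  refine MeasurableSet.inter ?_ ?_
  · exact Finset.measurableSet_biInter _ (fun u _ => measurableSet_lt (hm _) measurable_const)
  · exact Finset.measurableSet_biInter _ (fun u _ => measurableSet_lt (hm _) measurable_const)

lemma good_prob {M : ℕ} {p θ : ℝ} (hM : 2 ≤ M) (hp0 : 0 < p) (hp1 : p ≤ 1) (hb : 1 < (M : ℝ) ^ 2 * p)
    (hθ : 1 < θ) {P : Measure (PercSpace 2 M)} (hP : IsBernoulliPerc 2 M p P) :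
    ∃ (δ : ℝ) (m0 : ℕ), 0 < δ ∧ ∀ n, ENNReal.ofReal δ ≤ P (good M p θ m0 n) := by
  obtain ⟨δ, hδ, hpz⟩ := pz hp0 hp1 hb hP
  set b := (M : ℝ) ^ 2 * p with hbd
  have hb1 : 0 < b - 1 := by linarith
  have hb0 : 0 < b := by linarith
  have hθ0 : 0 < θ := by linarith
  set C := b / (b - 1) with hC
  have hC0 : 0 < C := by positivity
  set κ := max 1 ((M : ℝ) * p) with hκ
  have hκ0 : 0 < κ := lt_of_lt_of_le one_pos (le_max_left _ _)
  have hMr : (2 : ℝ) ≤ M := by exact_mod_cast hM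
  have hM0 : (0 : ℝ) < M := by linarith
  obtain ⟨k, hk⟩ := pow_unbounded_of_one_lt (2 * (M : ℝ) ^ 2) hθ
  set C' := (k * C) ^ k + 54 * (k : ℝ) ^ k with hC'
  have hC'0 : 0 ≤ C' := by positivity
  obtain ⟨m0, hm0⟩ := exists_pow_lt_of_lt_one (show 0 < δ / 2 / (2 * C' + 1) by positivity) (by norm_num : (1 / 2 : ℝ) < 1)
  refine ⟨δ / 2, m0, by positivity, fun n => ?_⟩
  -- the key per-level estimate
  have hθk : ∀ m : ℕ, (θ ^ m) ^ k ≥ 2 ^ m * ((M : ℝ) ^ 2) ^ m := by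
    intro m
    rw [← pow_mul, mul_comm m k, pow_mul, ← mul_pow]
    gcongr
  have hbad1 : ∀ m ∈ Finset.Icc m0 n, P (⋃ u ∈ words M m, {ω | θ ^ m * b ^ (n - m) ≤ (cnt (desc M n u) ω : ℝ)}) ≤
      ENNReal.ofReal ((k * C) ^ k * (1 / 2) ^ m) := by
    intro m hm
    have hm' := (Finset.mem_Icc.1 hm).2
    refine (measure_biUnion_finset_le _ _).trans ?_
    have h1 : ∀ u ∈ words M m, P {ω | θ ^ m * b ^ (n - m) ≤ (cnt (desc M n u) ω : ℝ)} ≤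
        ENNReal.ofReal ((k * C) ^ k / (2 ^ m * ((M : ℝ) ^ 2) ^ m)) := by
      intro u hu
      have hu' := mem_words.1 hu
      refine (desc_tail hp0 hp1 hb (by positivity) hP u (by omega) k).2.trans ?_
      apply ENNReal.ofReal_le_ofReal
      rw [← hbd, ← hC, hu']
      have : (k * (C * b ^ (n - m)) / (θ ^ m * b ^ (n - m))) ^ k = (k * C) ^ k / (θ ^ m) ^ k := by
        rw [← div_pow]; congr 1; field_simp
      rw [this]
      have := hθk m
      gcongr
    refine (Finset.sum_le_sum h1).trans ?_
    rw [Finset.sum_const, card_words, nsmul_eq_mul, ← ENNReal.ofReal_natCast, ← ENNReal.ofReal_mul (by positivity)]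
    apply ENNReal.ofReal_le_ofReal
    push_cast
    rw [one_div, inv_pow]
    apply le_of_eq
    field_simp
  have hbad2 : ∀ m ∈ Finset.Icc m0 n, P (⋃ x ∈ (({(0, 1), (1, 0)} : Finset (Fin 2 × Fin 2)) ×ˢ
        (Finset.Icc (-(M : ℤ) ^ m) ((M : ℤ) ^ m) ×ˢ Finset.Icc (-4 * (M : ℤ) ^ m) (4 * (M : ℤ) ^ m))),
      {ω | 11 * (m + 1) * (θ * κ) ^ m ≤ (cnt (strip M m x.1.1 x.1.2 x.2.1 x.2.2) ω : ℝ)}) ≤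
      ENNReal.ofReal (54 * (k : ℝ) ^ k * (1 / 2) ^ m) := by
    intro m hm
    refine (measure_biUnion_finset_le _ _).trans ?_
    have h1 : ∀ x ∈ (({(0, 1), (1, 0)} : Finset (Fin 2 × Fin 2)) ×ˢ
        (Finset.Icc (-(M : ℤ) ^ m) ((M : ℤ) ^ m) ×ˢ Finset.Icc (-4 * (M : ℤ) ^ m) (4 * (M : ℤ) ^ m))),
        P {ω | 11 * (m + 1) * (θ * κ) ^ m ≤ (cnt (strip M m x.1.1 x.1.2 x.2.1 x.2.2) ω : ℝ)} ≤
        ENNReal.ofReal ((k : ℝ) ^ k / (2 ^ m * ((M : ℝ) ^ 2) ^ m)) := by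
      rintro ⟨⟨i, j⟩, A, B⟩ hx
      have hij : i ≠ j := by
        have := (Finset.mem_product.1 hx).1
        simp only [Finset.mem_insert, Finset.mem_singleton, Prod.mk.injEq] at this
        rcases this with ⟨rfl, rfl⟩ | ⟨rfl, rfl⟩ <;> simp
      refine (strip_tail hM hp0 hp1 (by positivity) hP i j hij A B k).trans ?_
      apply ENNReal.ofReal_le_ofReal
      rw [← hκ]
      have : ((k : ℝ) * (11 * (m + 1) * κ ^ m) / (11 * (m + 1) * (θ * κ) ^ m)) ^ k = (k : ℝ) ^ k / (θ ^ m) ^ k := by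
        rw [← div_pow, mul_pow]; congr 1; field_simp
      rw [this]
      have := hθk m
      gcongr
    refine (Finset.sum_le_sum h1).trans ?_
    rw [Finset.sum_const, nsmul_eq_mul, ← ENNReal.ofReal_natCast, ← ENNReal.ofReal_mul (by positivity)]
    apply ENNReal.ofReal_le_ofReal
    have hcard : ((({(0, 1), (1, 0)} : Finset (Fin 2 × Fin 2)) ×ˢ
        (Finset.Icc (-(M : ℤ) ^ m) ((M : ℤ) ^ m) ×ˢ Finset.Icc (-4 * (M : ℤ) ^ m) (4 * (M : ℤ) ^ m))).card : ℝ) ≤ 54 * ((M : ℝ) ^ 2) ^ m := by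
      have hM1 : 1 ≤ M ^ m := Nat.one_le_pow _ _ (by omega)
      have e1 : (Finset.Icc (-(M : ℤ) ^ m) ((M : ℤ) ^ m)).card ≤ 3 * M ^ m := by
        rw [Int.card_Icc]
        zify at hM1
        have : (0:ℤ) ≤ (M : ℤ) ^ m + 1 - -(M : ℤ) ^ m := by linarith
        zify
        rw [Int.toNat_of_nonneg this]
        linarith
      have e2 : (Finset.Icc (-4 * (M : ℤ) ^ m) (4 * (M : ℤ) ^ m)).card ≤ 9 * M ^ m := by
        rw [Int.card_Icc]
        zify at hM1
        have : (0:ℤ) ≤ 4 * (M : ℤ) ^ m + 1 - -4 * (M : ℤ) ^ m := by linarith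
        zify
        rw [Int.toNat_of_nonneg this]
        linarith
      have e3 : ((({(0, 1), (1, 0)} : Finset (Fin 2 × Fin 2)) ×ˢ
        (Finset.Icc (-(M : ℤ) ^ m) ((M : ℤ) ^ m) ×ˢ Finset.Icc (-4 * (M : ℤ) ^ m) (4 * (M : ℤ) ^ m))).card) ≤ 2 * ((3 * M ^ m) * (9 * M ^ m)) := by
        rw [Finset.card_product, Finset.card_product]
        gcongr
        exact Finset.card_le_two
      calc _ ≤ ((2 * ((3 * M ^ m) * (9 * M ^ m)) : ℕ) : ℝ) := by exact_mod_cast e3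
        _ = _ := by push_cast; rw [← pow_mul, mul_comm 2 m, pow_mul]; ring
    refine (mul_le_mul_of_nonneg_right hcard (by positivity)).trans ?_
    rw [one_div, inv_pow]
    apply le_of_eq
    field_simp
  have hsub : {ω | b ^ n / 2 ≤ cnt (words M n) ω} ⊆ good M p θ m0 n ∪ ⋃ m ∈ Finset.Icc m0 n,
      ((⋃ u ∈ words M m, {ω | θ ^ m * b ^ (n - m) ≤ (cnt (desc M n u) ω : ℝ)}) ∪
      ⋃ x ∈ (({(0, 1), (1, 0)} : Finset (Fin 2 × Fin 2)) ×ˢ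
        (Finset.Icc (-(M : ℤ) ^ m) ((M : ℤ) ^ m) ×ˢ Finset.Icc (-4 * (M : ℤ) ^ m) (4 * (M : ℤ) ^ m))),
      {ω | 11 * (m + 1) * (θ * κ) ^ m ≤ (cnt (strip M m x.1.1 x.1.2 x.2.1 x.2.2) ω : ℝ)}) := by
    intro ω hω
    by_contra hcon
    rw [mem_union, not_or] at hcon
    obtain ⟨h1, h2⟩ := hcon
    apply h1
    refine ⟨hω, ?_⟩
    simp only [mem_iUnion, mem_union, not_exists, not_or, mem_ofPred_eq, not_le] at h2
    refine mem_iInter₂.2 (fun m hm => ⟨mem_iInter₂.2 (fun u hu => ?_), mem_iInter₂.2 (fun x hx => ?_)⟩)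
    · exact (h2 m hm).1 u hu
    · exact (h2 m hm).2 x hx
  have hfin := (hpz n).trans ((measure_mono hsub).trans ((measure_union_le _ _).trans
    (add_le_add_right (measure_biUnion_finset_le _ _) _)))
  have hsum : ∑ m ∈ Finset.Icc m0 n, P ((⋃ u ∈ words M m, {ω | θ ^ m * b ^ (n - m) ≤ (cnt (desc M n u) ω : ℝ)}) ∪
      ⋃ x ∈ (({(0, 1), (1, 0)} : Finset (Fin 2 × Fin 2)) ×ˢ
        (Finset.Icc (-(M : ℤ) ^ m) ((M : ℤ) ^ m) ×ˢ Finset.Icc (-4 * (M : ℤ) ^ m) (4 * (M : ℤ) ^ m))),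
      {ω | 11 * (m + 1) * (θ * κ) ^ m ≤ (cnt (strip M m x.1.1 x.1.2 x.2.1 x.2.2) ω : ℝ)}) ≤ ENNReal.ofReal (δ / 2) := by
    have h1 : ∀ m ∈ Finset.Icc m0 n, P ((⋃ u ∈ words M m, {ω | θ ^ m * b ^ (n - m) ≤ (cnt (desc M n u) ω : ℝ)}) ∪
      ⋃ x ∈ (({(0, 1), (1, 0)} : Finset (Fin 2 × Fin 2)) ×ˢ
        (Finset.Icc (-(M : ℤ) ^ m) ((M : ℤ) ^ m) ×ˢ Finset.Icc (-4 * (M : ℤ) ^ m) (4 * (M : ℤ) ^ m))),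
      {ω | 11 * (m + 1) * (θ * κ) ^ m ≤ (cnt (strip M m x.1.1 x.1.2 x.2.1 x.2.2) ω : ℝ)}) ≤ ENNReal.ofReal (C' * (1 / 2) ^ m) := by
      intro m hm
      refine (measure_union_le _ _).trans ((add_le_add (hbad1 m hm) (hbad2 m hm)).trans ?_)
      rw [← ENNReal.ofReal_add (by positivity) (by positivity)]
      apply ENNReal.ofReal_le_ofReal
      rw [hC']; apply le_of_eq; ring
    refine (Finset.sum_le_sum h1).trans ?_
    rw [← ENNReal.ofReal_sum_of_nonneg (fun _ _ => by positivity)]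
    apply ENNReal.ofReal_le_ofReal
    rw [← Finset.mul_sum]
    have h2 : ∑ m ∈ Finset.Icc m0 n, (1 / 2 : ℝ) ^ m ≤ 2 * (1 / 2) ^ m0 := by
      rcases le_total m0 (n + 1) with h | h
      · have : Finset.Icc m0 n = Finset.Ico m0 (n + 1) := by ext; simp
        rw [this, geom_sum_Ico (by norm_num) h]
        have : (0:ℝ) ≤ (1 / 2) ^ (n + 1) := by positivity
        rw [div_le_iff_of_neg (by norm_num)]
        linarith
      · rw [Finset.Icc_eq_empty (by omega)]
        simp
    rw [lt_div_iff₀ (by positivity)] at hm0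
    have : (0:ℝ) ≤ (1 / 2) ^ m0 := by positivity
    nlinarith [mul_le_mul_of_nonneg_left h2 hC'0]
  have hfin2 := hfin.trans (add_le_add_right hsum _)
  have e : ENNReal.ofReal δ = ENNReal.ofReal (δ / 2) + ENNReal.ofReal (δ / 2) := by
    rw [← ENNReal.ofReal_add (by positivity) (by positivity)]; congr 1; ring
  rw [e] at hfin2
  exact (ENNReal.add_le_add_iff_right ENNReal.ofReal_ne_top).1 hfin2

lemma retained_pfx {M : ℕ} {ω : PercSpace 2 M} {u w : List (Alpha 2 M)} (h : Retained 2 M ω w)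
    (hu : u <+: w) : Retained 2 M ω u := fun v hv hvu => h v hv (hvu.trans hu)

lemma mem_wordCube {M : ℕ} (hM : 2 ≤ M) {w : List (Alpha 2 M)} {x : EuclideanSpace ℝ (Fin 2)} :
    x ∈ wordCube 2 M w ↔ ∀ i, (nco M w i : ℝ) / (M : ℝ) ^ w.length ≤ x i ∧
      x i ≤ ((nco M w i : ℝ) + 1) / (M : ℝ) ^ w.length := by
  have : (M : ℝ) ^ (-(w.length : ℤ)) = 1 / (M : ℝ) ^ w.length := by
    rw [zpow_neg, zpow_natCast, one_div]
  simp only [wordCube, mem_ofPred_eq, wordBase_eq hM, this, add_div]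

/-- The base point of a cube. -/
def bp (M : ℕ) (w : List (Alpha 2 M)) : EuclideanSpace ℝ (Fin 2) :=
  WithLp.toLp 2 (fun i => (nco M w i : ℝ) / (M : ℝ) ^ w.length)

lemma bp_mem {M : ℕ} (hM : 2 ≤ M) (w : List (Alpha 2 M)) : bp M w ∈ wordCube 2 M w := by
  rw [mem_wordCube hM]
  intro i
  have hM0 : (0 : ℝ) < M := by positivity
  refine ⟨le_rfl, ?_⟩
  show (nco M w i : ℝ) / (M : ℝ) ^ w.length ≤ _
  gcongr
  linarith

lemma wordCube_pfx {M : ℕ} (hM : 2 ≤ M) {u w : List (Alpha 2 M)} (h : u <+: w) :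
    wordCube 2 M w ⊆ wordCube 2 M u := by
  obtain ⟨v, rfl⟩ := h
  intro x hx
  rw [mem_wordCube hM] at hx ⊢
  intro i
  have hM0 : (0 : ℝ) < M := by positivity
  obtain ⟨h1, h2⟩ := hx i
  rw [nco_append, List.length_append, pow_add] at h1 h2
  have h3 : (nco M v i : ℝ) + 1 ≤ (M : ℝ) ^ v.length := by exact_mod_cast nco_lt v i
  push_cast at h1 h2
  constructor
  · refine le_trans ?_ h1
    rw [div_le_div_iff₀ (by positivity) (by positivity)]
    have : (0:ℝ) ≤ nco M v i := by positivity
    have h4 : (0:ℝ) < (M:ℝ) ^ u.length := by positivity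
    nlinarith [mul_nonneg this h4.le]
  · refine le_trans h2 ?_
    rw [div_le_div_iff₀ (by positivity) (by positivity)]
    have h4 : (0:ℝ) < (M:ℝ) ^ u.length := by positivity
    nlinarith [mul_le_mul_of_nonneg_right h3 h4.le]

lemma isClosed_wordCube (M : ℕ) (w : List (Alpha 2 M)) : IsClosed (wordCube 2 M w) := by
  have : wordCube 2 M w = ⋂ i, {x | wordBase 2 M w i ≤ x i ∧ x i ≤ wordBase 2 M w i + (M : ℝ) ^ (-(w.length : ℤ))} := by
    ext x; simp [wordCube]
  rw [this]
  refine isClosed_iInter (fun i => ?_)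
  have hc : Continuous (fun x : EuclideanSpace ℝ (Fin 2) => x i) := by fun_prop
  exact (isClosed_le continuous_const hc).inter (isClosed_le hc continuous_const)

lemma dist_wordCube {M : ℕ} (hM : 2 ≤ M) {w : List (Alpha 2 M)} {x y : EuclideanSpace ℝ (Fin 2)}
    (hx : x ∈ wordCube 2 M w) (hy : y ∈ wordCube 2 M w) : dist x y ≤ 2 / (M : ℝ) ^ w.length := by
  rw [mem_wordCube hM] at hx hy
  have hM0 : (0 : ℝ) < M := by positivity
  have h : ∀ i, (x i - y i) ^ 2 ≤ (1 / (M : ℝ) ^ w.length) ^ 2 := by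
    intro i
    have h1 := hx i
    have h2 := hy i
    rw [add_div] at h1 h2
    apply sq_le_sq'  <;> linarith
  rw [EuclideanSpace.dist_eq, Fin.sum_univ_two, Real.dist_eq, Real.dist_eq, sq_abs, sq_abs]
  apply Real.sqrt_le_iff.2
  refine ⟨by positivity, ?_⟩
  have := h 0
  have := h 1
  have e : (2 / (M : ℝ) ^ w.length) ^ 2 = 4 * (1 / (M : ℝ) ^ w.length) ^ 2 := by ring
  have : 0 ≤ (1 / (M : ℝ) ^ w.length) ^ 2 := by positivity
  linarith

lemma isCompact_wordCube {M : ℕ} (hM : 2 ≤ M) (w : List (Alpha 2 M)) : IsCompact (wordCube 2 M w) := by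
  refine Metric.isCompact_of_isClosed_isBounded (isClosed_wordCube M w) ?_
  exact Metric.isBounded_iff.2 ⟨_, fun x hx y hy => dist_wordCube hM hx hy⟩

lemma isCompact_approx {M : ℕ} (hM : 2 ≤ M) (ω : PercSpace 2 M) (n : ℕ) : IsCompact (approx 2 M ω n) := by
  refine Set.Finite.isCompact_biUnion ?_ (fun w _ => isCompact_wordCube hM w)
  exact (words M n).finite_toSet.subset (fun w hw => by simpa [mem_words] using hw.1)

lemma approx_anti {M : ℕ} (hM : 2 ≤ M) (ω : PercSpace 2 M) : Antitone (approx 2 M ω) := by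
  intro m n hmn x hx
  simp only [approx, mem_iUnion, mem_ofPred_eq] at hx ⊢
  obtain ⟨w, ⟨hw, hr⟩, hx⟩ := hx
  refine ⟨w.take m, ⟨by simp; omega, retained_pfx hr (List.take_prefix _ _)⟩, wordCube_pfx hM (List.take_prefix _ _) hx⟩

lemma percLimit_eq {M : ℕ} (ω : PercSpace 2 M) : percLimit 2 M ω = ⋂ n : ℕ, approx 2 M ω (n + 1) := by
  ext x
  simp only [percLimit, mem_iInter, mem_ofPred_eq]
  constructor
  · intro h n; exact h (n + 1) (by omega)
  · intro h n hn
    obtain ⟨k, rfl⟩ : ∃ k, n = k + 1 := ⟨n - 1, by omega⟩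
    exact h k

lemma mem_strip {M m : ℕ} (hM : 2 ≤ M) {u : List (Alpha 2 M)} (hu : u.length = m) {i j : Fin 2}
    {a x : ℝ} (ha : |a| ≤ 1) {y : EuclideanSpace ℝ (Fin 2)} (hy : y ∈ wordCube 2 M u)
    (hx : |y i - a * y j - x| ≤ 1 / (M : ℝ) ^ m) :
    u ∈ strip M m i j ⌊a * (M : ℝ) ^ m⌋ ⌊x * (M : ℝ) ^ m⌋ := by
  refine Finset.mem_filter.2 ⟨mem_words.2 hu, ?_⟩
  rw [mem_wordCube hM, hu] at hy
  have hM0 : (0 : ℝ) < M := by positivity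
  have hK0 : 0 < (M : ℝ) ^ m := by positivity
  have hXi : (nco M u i : ℝ) ≤ (M : ℝ) ^ m := by
    have := (nco_lt u i).le; rw [hu] at this; exact_mod_cast this
  have hXj : (nco M u j : ℝ) ≤ (M : ℝ) ^ m := by
    have := (nco_lt u j).le; rw [hu] at this; exact_mod_cast this
  have hXj0 : (0:ℝ) ≤ (nco M u j : ℝ) := by positivity
  rw [← @Int.cast_le ℝ]
  push_cast
  obtain ⟨i1, i2⟩ := hy i
  obtain ⟨j1, j2⟩ := hy j
  generalize (nco M u i : ℝ) = X at *
  generalize (nco M u j : ℝ) = Y at *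
  generalize (M : ℝ) ^ m = K at *
  have a1 := Int.floor_le (a * K)
  have a2 := Int.lt_floor_add_one (a * K)
  have b1 := Int.floor_le (x * K)
  have b2 := Int.lt_floor_add_one (x * K)
  generalize (⌊a * K⌋ : ℝ) = A at *
  generalize (⌊x * K⌋ : ℝ) = B at *
  rw [div_le_iff₀ hK0] at i1 j1
  rw [le_div_iff₀ hK0] at i2 j2
  rw [abs_le] at hx
  have x1 : -1 ≤ (y i * K) - a * (y j * K) - x * K := by
    have := mul_le_mul_of_nonneg_right hx.1 hK0.le
    rw [neg_mul, one_div, inv_mul_cancel₀ hK0.ne'] at this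
    linarith
  have x2 : (y i * K) - a * (y j * K) - x * K ≤ 1 := by
    have := mul_le_mul_of_nonneg_right hx.2 hK0.le
    rw [one_div, inv_mul_cancel₀ hK0.ne'] at this
    linarith
  generalize y i * K = p at *
  generalize y j * K = q at *
  obtain ⟨ha1, ha2⟩ := abs_le.1 ha
  have c1 : |a * (q - Y)| ≤ 1 := by
    rw [abs_mul]
    have : |q - Y| ≤ 1 := abs_le.2 ⟨by linarith, by linarith⟩
    have := abs_nonneg (q - Y)
    nlinarith [abs_nonneg a]
  rw [abs_le] at c1
  -- |X - a Y - xK| ≤ 3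
  have d1 : -3 ≤ X - a * Y - x * K := by linarith
  have d2 : X - a * Y - x * K ≤ 3 := by linarith
  have e1 : 0 ≤ (a * K - A) * Y := mul_nonneg (by linarith) hXj0
  have e2 : (a * K - A) * Y ≤ K := by nlinarith
  have f1 : 0 ≤ (x * K - B) * K := mul_nonneg (by linarith) hK0.le
  have f2 : (x * K - B) * K ≤ K := by nlinarith
  have g1 := mul_le_mul_of_nonneg_right d1 hK0.le
  have g2 := mul_le_mul_of_nonneg_right d2 hK0.le
  rw [abs_le]
  constructor <;> nlinarith

lemma count_bound {M : ℕ} {p θ : ℝ} {m0 n : ℕ} (hM : 2 ≤ M) (hp0 : 0 < p) (hθ : 1 < θ)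
    {ω : PercSpace 2 M} (hω : ω ∈ good M p θ m0 n) {i j : Fin 2} (hij : i ≠ j) {a : ℝ} (ha : |a| ≤ 1)
    {ι : Type*} (s : Finset ι) (x : ι → ℝ) (m : ι → ℕ) (hm0 : ∀ k ∈ s, m0 ≤ m k) (hmn : ∀ k ∈ s, m k ≤ n)
    (hcov : ∀ y ∈ approx 2 M ω n, ∃ k ∈ s, |y i - a * y j - x k| ≤ 1 / (M : ℝ) ^ m k) :
    ((M : ℝ) ^ 2 * p) ^ n / 2 ≤ ∑ k ∈ s, (11 * (m k + 1) * (θ * max 1 ((M : ℝ) * p)) ^ m k) *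
      (θ ^ m k * ((M : ℝ) ^ 2 * p) ^ (n - m k)) := by
  classical
  obtain ⟨h1, h2⟩ := hω
  refine le_trans h1 ?_
  have hM0 : (0 : ℝ) < M := by positivity
  have hMr : (1 : ℝ) ≤ M := by exact_mod_cast (by omega : 1 ≤ M)
  set s' := s.filter (fun k => |x k| ≤ 3) with hs'
  have hsub : (words M n).filter (fun v => Retained 2 M ω v) ⊆ s'.biUnion (fun k =>
      ((strip M (m k) i j ⌊a * (M : ℝ) ^ (m k)⌋ ⌊x k * (M : ℝ) ^ (m k)⌋).filter (fun v => Retained 2 M ω v)).biUnion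
        (fun u => (desc M n u).filter (fun v => Retained 2 M ω v))) := by
    intro w hw
    obtain ⟨hw, hr⟩ := Finset.mem_filter.1 hw
    have hwl := mem_words.1 hw
    have hbw : bp M w ∈ approx 2 M ω n := by
      simp only [approx, mem_iUnion, mem_ofPred_eq]
      exact ⟨w, ⟨hwl, hr⟩, bp_mem hM w⟩
    obtain ⟨k, hk, hk2⟩ := hcov _ hbw
    have hlen : (w.take (m k)).length = m k := by
      have := hmn k hk
      simp; omega
    have hb0 : ∀ l, 0 ≤ bp M w l ∧ bp M w l ≤ 1 := by
      intro l
      show 0 ≤ (nco M w l : ℝ) / (M : ℝ) ^ w.length ∧ (nco M w l : ℝ) / (M : ℝ) ^ w.length ≤ 1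
      refine ⟨by positivity, ?_⟩
      rw [div_le_one (by positivity)]
      exact_mod_cast (nco_lt w l).le
    refine Finset.mem_biUnion.2 ⟨k, Finset.mem_filter.2 ⟨hk, ?_⟩, Finset.mem_biUnion.2 ⟨w.take (m k), Finset.mem_filter.2 ⟨?_, ?_⟩, 
      Finset.mem_filter.2 ⟨Finset.mem_filter.2 ⟨hw, ?_⟩, hr⟩⟩⟩
    · have h5 : 1 / (M : ℝ) ^ m k ≤ 1 := by
        rw [div_le_one (by positivity)]; exact one_le_pow₀ hMr
      have h6 := abs_le.1 (hk2.trans h5)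
      have h7 : |a * bp M w j| ≤ 1 := by
        rw [abs_mul, abs_of_nonneg (hb0 j).1]
        nlinarith [abs_nonneg a, (hb0 j).1, (hb0 j).2]
      rw [abs_le] at h7 ⊢
      have := hb0 i
      constructor <;> linarith
    · exact mem_strip hM hlen ha (wordCube_pfx hM (List.take_prefix _ _) (bp_mem hM w)) hk2
    · exact retained_pfx hr (List.take_prefix _ _)
    · rw [hlen]
  have hc : cnt (words M n) ω ≤ ∑ k ∈ s', ∑ u ∈ ((strip M (m k) i j ⌊a * (M : ℝ) ^ (m k)⌋ ⌊x k * (M : ℝ) ^ (m k)⌋).filter (fun v => Retained 2 M ω v)),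
      cnt (desc M n u) ω := by
    have h3 := (Finset.card_le_card hsub).trans (Finset.card_biUnion_le.trans (Finset.sum_le_sum (fun k _ => Finset.card_biUnion_le)))
    simpa [cnt] using h3
  have hb0 : 0 < (M : ℝ) ^ 2 * p := by positivity
  have hθ0 : 0 < θ := by linarith
  have hκ0 : 0 < max 1 ((M : ℝ) * p) := lt_of_lt_of_le one_pos (le_max_left _ _)
  calc (cnt (words M n) ω : ℝ) ≤ ∑ k ∈ s', ∑ u ∈ ((strip M (m k) i j ⌊a * (M : ℝ) ^ (m k)⌋ ⌊x k * (M : ℝ) ^ (m k)⌋).filter (fun v => Retained 2 M ω v)),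
      (cnt (desc M n u) ω : ℝ) := by exact_mod_cast hc
    _ ≤ ∑ k ∈ s', (11 * (m k + 1) * (θ * max 1 ((M : ℝ) * p)) ^ m k) *
      (θ ^ m k * ((M : ℝ) ^ 2 * p) ^ (n - m k)) := by
        refine Finset.sum_le_sum (fun k hk => ?_)
        obtain ⟨hks, hx3⟩ := Finset.mem_filter.1 hk
        have hg := mem_iInter₂.1 h2 (m k) (Finset.mem_Icc.2 ⟨hm0 k hks, hmn k hks⟩)
        have g1 : ∀ u ∈ words M (m k), (cnt (desc M n u) ω : ℝ) < θ ^ m k * ((M : ℝ) ^ 2 * p) ^ (n - m k) := fun u hu => mem_iInter₂.1 hg.1 u hu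
        have hK0 : 0 < (M : ℝ) ^ m k := by positivity
        have g2 := mem_iInter₂.1 hg.2 ((i, j), (⌊a * (M : ℝ) ^ (m k)⌋, ⌊x k * (M : ℝ) ^ (m k)⌋)) (by
          obtain ⟨a1, a2⟩ := abs_le.1 ha
          obtain ⟨x1, x2⟩ := abs_le.1 hx3
          simp only [Finset.mem_product, Finset.mem_Icc]
          refine ⟨?_, ⟨?_, ?_⟩, ⟨?_, ?_⟩⟩
          · have : ∀ i j : Fin 2, i ≠ j → (i, j) ∈ ({(0, 1), (1, 0)} : Finset (Fin 2 × Fin 2)) := by decide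
            exact this i j hij
          · rw [Int.le_floor]; push_cast; nlinarith
          · rw [← @Int.cast_le ℝ]; refine (Int.floor_le _).trans ?_; push_cast; nlinarith
          · rw [Int.le_floor]; push_cast; nlinarith
          · rw [← @Int.cast_le ℝ]; refine (Int.floor_le _).trans ?_; push_cast; nlinarith)
        refine (Finset.sum_le_card_nsmul _ _ _ (fun u hu => (g1 u ?_).le)).trans ?_
        · exact (Finset.mem_filter.1 (Finset.mem_filter.1 hu).1).1
        · rw [nsmul_eq_mul]
          refine mul_le_mul_of_nonneg_right ?_ (by positivity)
          rw [mem_ofPred_eq] at g2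
          have := le_of_lt g2
          simpa [cnt] using this
    _ ≤ _ := Finset.sum_le_sum_of_subset_of_nonneg (Finset.filter_subset _ _) (fun _ _ _ => by positivity)

lemma cover_null {S : Set ℝ} {M : ℕ} (hM : 2 ≤ M) {t : ℝ} (ht : 0 < t) (h0 : μH[t] S = 0) {ε : ℝ} (hε : 0 < ε) :
    ∃ (x : ℕ → ℝ) (m : ℕ → ℕ), S ⊆ ⋃ k, Metric.ball (x k) (1 / (M : ℝ) ^ m k) ∧
      ∀ s : Finset ℕ, ∑ k ∈ s, (((M : ℝ) ^ t)⁻¹) ^ m k ≤ ε := by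
  have hM1 : (1 : ℝ) < M := by exact_mod_cast (by omega : 1 < M)
  have hM0 : (0 : ℝ) < M := by linarith
  have hMt : 1 < (M : ℝ) ^ t := Real.one_lt_rpow hM1 ht
  obtain ⟨Y, hY⟩ : ∃ Y, Y = ((M : ℝ) ^ t)⁻¹ := ⟨_, rfl⟩
  have hY0 : 0 < Y := by rw [hY]; positivity
  have hY1 : Y < 1 := by rw [hY]; exact inv_lt_one_of_one_lt₀ hMt
  rw [← hY]
  -- the budget
  obtain ⟨η, hη⟩ : ∃ η, η = min (1 / 2) (ε * Y / 2) := ⟨_, rfl⟩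
  have hη0 : 0 < η := by rw [hη]; positivity
  have hη1 : η ≤ 1 / 2 := by rw [hη]; exact min_le_left _ _
  have hη2 : η ≤ ε * Y / 2 := by rw [hη]; exact min_le_right _ _
  rw [Measure.hausdorffMeasure_apply] at h0
  have h1 : (⨅ t' : ℕ → Set ℝ, ⨅ (_ : S ⊆ ⋃ n, t' n), ⨅ (_ : ∀ n, Metric.ediam (t' n) ≤ 1),
      ∑' n, ⨆ (_ : (t' n).Nonempty), Metric.ediam (t' n) ^ t) = 0 := by
    refine le_antisymm ?_ bot_le
    rw [← h0]
    exact le_iSup₂ (f := fun (r : ℝ≥0∞) (_ : 0 < r) => ⨅ t' : ℕ → Set ℝ, ⨅ (_ : S ⊆ ⋃ n, t' n), ⨅ (_ : ∀ n, Metric.ediam (t' n) ≤ r),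
      ∑' n, ⨆ (_ : (t' n).Nonempty), Metric.ediam (t' n) ^ t) 1 one_pos
  have h2 : (⨅ t' : ℕ → Set ℝ, ⨅ (_ : S ⊆ ⋃ n, t' n), ⨅ (_ : ∀ n, Metric.ediam (t' n) ≤ 1),
      ∑' n, ⨆ (_ : (t' n).Nonempty), Metric.ediam (t' n) ^ t) < ENNReal.ofReal η := by
    rw [h1]; exact ENNReal.ofReal_pos.2 hη0
  simp only [iInf_lt_iff] at h2
  obtain ⟨U, hSU, hU1, hU⟩ := h2
  obtain ⟨D, hD⟩ : ∃ D : ℕ → ℝ≥0∞, D = fun n => ⨆ (_ : (U n).Nonempty), Metric.ediam (U n) ^ t := ⟨_, rfl⟩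
  have hU' : ∑' n, D n < ENNReal.ofReal η := by rw [hD]; exact hU
  have hDfin : ∀ n, D n ≠ ∞ := fun n => ((ENNReal.le_tsum n).trans_lt (hU'.trans ENNReal.ofReal_lt_top)).ne
  obtain ⟨ρ, hρ⟩ : ∃ ρ : ℕ → ℝ, ρ = fun n => (D n).toReal + η / 2 * (1 / 2) ^ n := ⟨_, rfl⟩
  have hρ0 : ∀ n, 0 < ρ n := fun n => by rw [hρ]; positivity
  have hρs : ∀ s : Finset ℕ, ∑ n ∈ s, ρ n ≤ 2 * η := by
    intro s
    rw [hρ, Finset.sum_add_distrib]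
    have a1 : ∑ n ∈ s, (D n).toReal ≤ η := by
      rw [← ENNReal.toReal_sum (fun n _ => hDfin n)]
      exact ENNReal.toReal_le_of_le_ofReal hη0.le ((ENNReal.sum_le_tsum s).trans hU'.le)
    have a2 : ∑ n ∈ s, η / 2 * (1 / 2) ^ n ≤ η := by
      have h := (hasSum_geometric_two' η)
      have := sum_le_hasSum s (fun n _ => by positivity) h
      refine le_trans (le_of_eq ?_) this
      refine Finset.sum_congr rfl (fun n _ => ?_)
      rw [one_div, inv_pow]; field_simp
    linarith
  have hρ1 : ∀ n, ρ n ≤ 1 := fun n => by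
    have := hρs {n}
    rw [Finset.sum_singleton] at this; linarith
  choose m hm1 hm2 using fun n => exists_nat_pow_near_of_lt_one (hρ0 n) (hρ1 n) hY0 hY1
  have hball : ∀ n, ∃ x, U n ⊆ Metric.ball x (1 / (M : ℝ) ^ m n) := by
    intro n
    rcases (U n).eq_empty_or_nonempty with he | ⟨x, hx⟩
    · exact ⟨0, by rw [he]; exact empty_subset _⟩
    · refine ⟨x, fun y hy => ?_⟩
      rw [Metric.mem_ball]
      have hDn : D n = Metric.ediam (U n) ^ t := by
        rw [hD]; exact iSup_pos ⟨x, hx⟩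
      have e1 : edist y x ≤ Metric.ediam (U n) := Metric.edist_le_ediam_of_mem hy hx
      have e2 : edist y x ^ t ≤ D n := by rw [hDn]; exact ENNReal.rpow_le_rpow e1 ht.le
      have e3 : dist y x ^ t ≤ (D n).toReal := by
        rw [edist_dist, ENNReal.ofReal_rpow_of_nonneg dist_nonneg ht.le] at e2
        have := ENNReal.toReal_mono (hDfin n) e2
        rwa [ENNReal.toReal_ofReal (by positivity)] at this
      have e4 : dist y x ^ t < (1 / (M : ℝ) ^ m n) ^ t := by
        have : (1 / (M : ℝ) ^ m n) ^ t = Y ^ m n := by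
          rw [hY, one_div, Real.inv_rpow (by positivity), inv_pow, ← Real.rpow_natCast, ← Real.rpow_natCast,
            ← Real.rpow_mul hM0.le, ← Real.rpow_mul hM0.le, mul_comm]
        rw [this]
        refine lt_of_lt_of_le ?_ (hm2 n)
        rw [hρ]
        have : 0 < η / 2 * (1 / 2) ^ n := by positivity
        show _ < (D n).toReal + η / 2 * (1 / 2) ^ n
        linarith
      exact (Real.rpow_lt_rpow_iff dist_nonneg (by positivity) ht).1 e4
  choose x hx using hball
  refine ⟨x, m, hSU.trans (iUnion_mono hx), fun s => ?_⟩
  have : Y * ∑ k ∈ s, Y ^ m k ≤ 2 * η := by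
    refine le_trans ?_ (hρs s)
    rw [Finset.mul_sum]
    refine Finset.sum_le_sum (fun k _ => ?_)
    rw [← pow_succ']; exact (hm1 k).le
  have h3 : Y * ∑ k ∈ s, Y ^ m k ≤ Y * ε := by linarith
  exact le_of_mul_le_mul_left h3 hY0

lemma dim_lower {M : ℕ} {p θ C t : ℝ} {m0 : ℕ} (hM : 2 ≤ M) (hp0 : 0 < p) (hθ : 1 < θ) (ht : 0 < t) (hC : 0 < C)
    (hCt : ∀ m : ℕ, 11 * (m + 1) * (θ * max 1 ((M : ℝ) * p)) ^ m * θ ^ m ≤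
      C * ((M : ℝ) ^ 2 * p) ^ m * (((M : ℝ) ^ t)⁻¹) ^ m)
    {ω : PercSpace 2 M} (hω : ∀ N, ∃ n ≥ N, ω ∈ good M p θ m0 n) {i j : Fin 2} (hij : i ≠ j) {a : ℝ} (ha : |a| ≤ 1) :
    ENNReal.ofReal t ≤ dimH ((fun x : EuclideanSpace ℝ (Fin 2) => x i - a * x j) '' percLimit 2 M ω) := by
  set f := (fun x : EuclideanSpace ℝ (Fin 2) => x i - a * x j) with hf
  have hfc : Continuous f := by rw [hf]; fun_prop
  have hM1 : (1 : ℝ) < M := by exact_mod_cast (by omega : 1 < M)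
  have hM0 : (0 : ℝ) < M := by linarith
  have hMt : 1 < (M : ℝ) ^ t := Real.one_lt_rpow hM1 ht
  obtain ⟨Y, hY⟩ : ∃ Y, Y = ((M : ℝ) ^ t)⁻¹ := ⟨_, rfl⟩
  have hY0 : 0 < Y := by rw [hY]; positivity
  have hY1 : Y < 1 := by rw [hY]; exact inv_lt_one_of_one_lt₀ hMt
  have hb0 : 0 < (M : ℝ) ^ 2 * p := by positivity
  refine le_dimH_of_hausdorffMeasure_ne_zero (d := t.toNNReal) ?_
  rw [Real.coe_toNNReal t ht.le]
  intro h0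
  obtain ⟨x, m, hcov, hsum⟩ := cover_null hM ht h0 (show 0 < min (Y ^ m0) (1 / (4 * C)) by positivity)
  rw [← hY] at hsum
  have hmm : ∀ k, m0 ≤ m k := by
    intro k
    have := (hsum {k}).trans (min_le_left _ _)
    rw [Finset.sum_singleton] at this
    exact (pow_le_pow_iff_right_of_lt_one₀ hY0 hY1).1 this
  -- compactness
  obtain ⟨N, hN⟩ := exists_subset_nhds_of_isCompact (V := fun n : ℕ => approx 2 M ω (n + 1))
    (U := ⋃ k, f ⁻¹' Metric.ball (x k) (1 / (M : ℝ) ^ m k))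
    (directed_of_isDirected_le (fun a b hab => approx_anti hM ω (by omega))) (fun n => isCompact_approx hM ω _)
    (by
      intro y hy
      rw [← percLimit_eq] at hy
      refine IsOpen.mem_nhds (isOpen_iUnion (fun k => Metric.isOpen_ball.preimage hfc)) ?_
      have := hcov ⟨y, hy, rfl⟩
      simpa using this)
  obtain ⟨s, hs⟩ := (isCompact_approx hM ω (N + 1)).elim_finite_subcover _ (fun k => Metric.isOpen_ball.preimage hfc) hN
  obtain ⟨n, hn, hg⟩ := hω (max (N + 1) (s.sup m))
  have hcb := count_bound hM hp0 hθ hg hij ha s x m (fun k _ => hmm k)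
    (fun k hk => (Finset.le_sup hk).trans ((le_max_right _ _).trans hn)) (by
      intro y hy
      have := hs (approx_anti hM ω ((le_max_left _ _).trans hn) hy)
      simp only [mem_iUnion, mem_preimage, Metric.mem_ball, Real.dist_eq] at this
      obtain ⟨k, hk, h⟩ := this
      exact ⟨k, hk, h.le⟩)
  have h5 : ∑ k ∈ s, (11 * (m k + 1) * (θ * max 1 ((M : ℝ) * p)) ^ m k) *
      (θ ^ m k * ((M : ℝ) ^ 2 * p) ^ (n - m k)) ≤ ∑ k ∈ s, C * ((M : ℝ) ^ 2 * p) ^ n * Y ^ m k := by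
    refine Finset.sum_le_sum (fun k hk => ?_)
    have hk' : m k ≤ n := (Finset.le_sup hk).trans ((le_max_right _ _).trans hn)
    have := mul_le_mul_of_nonneg_right (hCt (m k)) (show 0 ≤ ((M : ℝ) ^ 2 * p) ^ (n - m k) by positivity)
    rw [← hY] at this
    have e : ((M : ℝ) ^ 2 * p) ^ n = ((M : ℝ) ^ 2 * p) ^ m k * ((M : ℝ) ^ 2 * p) ^ (n - m k) := by
      rw [← pow_add]; congr 1; omega
    rw [e]
    linarith
  rw [← Finset.mul_sum] at h5
  have h6 := (hsum s).trans (min_le_right _ _)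
  have hbn : 0 < ((M : ℝ) ^ 2 * p) ^ n := by positivity
  have h7 := mul_le_mul_of_nonneg_left h6 (show 0 ≤ C * ((M : ℝ) ^ 2 * p) ^ n by positivity)
  have h8 : C * ((M : ℝ) ^ 2 * p) ^ n * (1 / (4 * C)) = ((M : ℝ) ^ 2 * p) ^ n / 4 := by field_simp
  linarith

lemma choose_theta {M : ℕ} {p t : ℝ} (hM : 2 ≤ M) (hp0 : 0 < p) (ht1 : t < 1)
    (htb : (M : ℝ) ^ t < (M : ℝ) ^ 2 * p) : ∃ θ C : ℝ, 1 < θ ∧ 0 < C ∧ 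
    (∀ m : ℕ, 11 * (m + 1) * (θ * max 1 ((M : ℝ) * p)) ^ m * θ ^ m ≤
      C * ((M : ℝ) ^ 2 * p) ^ m * (((M : ℝ) ^ t)⁻¹) ^ m) := by
  have hM1 : (1 : ℝ) < M := by exact_mod_cast (by omega : 1 < M)
  have hM0 : (0 : ℝ) < M := by linarith
  have hMt : 0 < (M : ℝ) ^ t := by positivity
  have hMt1 : (M : ℝ) ^ t < M := by
    conv_rhs => rw [← Real.rpow_one (M : ℝ)]
    exact Real.rpow_lt_rpow_of_exponent_lt hM1 ht1
  set κ := max 1 ((M : ℝ) * p) with hκ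
  have hκ0 : 0 < κ := lt_of_lt_of_le one_pos (le_max_left _ _)
  obtain ⟨r, hr⟩ : ∃ r, r = (M : ℝ) ^ 2 * p * ((M : ℝ) ^ t)⁻¹ / κ := ⟨_, rfl⟩
  have hr1 : 1 < r := by
    rw [hr, lt_div_iff₀ hκ0, one_mul, ← div_eq_mul_inv, lt_div_iff₀ hMt, hκ, max_mul_of_nonneg _ _ hMt.le]
    refine max_lt (by linarith) ?_
    have : 0 < (M : ℝ) * p := by positivity
    nlinarith
  have hr0 : 0 < r := by linarith
  set θ := r ^ (1 / 3 : ℝ) with hθ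
  have hθ1 : 1 < θ := Real.one_lt_rpow hr1 (by norm_num)
  have hθ3 : θ ^ 3 = r := by
    rw [hθ, ← Real.rpow_natCast, ← Real.rpow_mul hr0.le]; norm_num
  have hθ0 : 0 < θ := by linarith
  have hθm : 0 < θ - 1 := by linarith
  refine ⟨θ, 11 * (1 + 1 / (θ - 1)), hθ1, by positivity, fun m => ?_⟩
  have hB : (m : ℝ) + 1 ≤ (1 + 1 / (θ - 1)) * θ ^ m := by
    have h1 : 1 + (m : ℝ) * (θ - 1) ≤ θ ^ m := by
      have := one_add_mul_le_pow (show (-2 : ℝ) ≤ θ - 1 by linarith) m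
      simpa using this
    have h2 : (m : ℝ) ≤ 1 / (θ - 1) * θ ^ m := by
      rw [one_div, ← div_eq_inv_mul, le_div_iff₀ hθm]; linarith
    have h3 : 1 ≤ θ ^ m := one_le_pow₀ hθ1.le
    nlinarith
  have e : (M : ℝ) ^ 2 * p * ((M : ℝ) ^ t)⁻¹ = θ ^ 3 * κ := by rw [hθ3, hr]; field_simp
  rw [mul_assoc (11 * (1 + 1 / (θ - 1))), ← mul_pow ((M : ℝ) ^ 2 * p), e]
  have h4 : 11 * (1 + 1 / (θ - 1)) * (θ ^ 3 * κ) ^ m = 11 * ((1 + 1 / (θ - 1)) * θ ^ m) * (θ * κ) ^ m * θ ^ m := by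
    rw [mul_pow, mul_pow, pow_right_comm]; ring
  rw [h4]
  gcongr

/-- Lower bound for dimension of all (skew) projections. -/
def PropT (M : ℕ) (t : ℝ) (ω : PercSpace 2 M) : Prop :=
  ∀ i j : Fin 2, i ≠ j → ∀ a : ℝ, |a| ≤ 1 →
    ENNReal.ofReal t ≤ dimH ((fun x : EuclideanSpace ℝ (Fin 2) => x i - a * x j) '' percLimit 2 M ω)

/-- Extinction. -/
def ext0 (M : ℕ) : Set (PercSpace 2 M) := ⋃ n : ℕ, ⋂ w ∈ words M n, {ω | ¬ Retained 2 M ω w}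

lemma measurableSet_ext0 (M : ℕ) : MeasurableSet (ext0 M) :=
  MeasurableSet.iUnion (fun _ => Finset.measurableSet_biInter _ (fun w _ => (measurableSet_retained w).compl))

lemma mem_ext0 {M : ℕ} {ω : PercSpace 2 M} : ω ∈ ext0 M ↔ ∃ n, ∀ w : List (Alpha 2 M), w.length = n → ¬ Retained 2 M ω w := by
  simp [ext0, mem_words]

lemma percLimit_ext0 {M : ℕ} (hM : 2 ≤ M) {ω : PercSpace 2 M} (h : ω ∈ ext0 M) : percLimit 2 M ω = ∅ := by
  obtain ⟨n, hn⟩ := mem_ext0.1 h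
  rw [eq_empty_iff_forall_notMem]
  intro x hx
  rw [percLimit_eq, mem_iInter] at hx
  have := approx_anti hM ω (Nat.le_succ n) (hx n)
  simp only [approx, mem_iUnion, mem_ofPred_eq] at this
  obtain ⟨w, ⟨hw, hr⟩, _⟩ := this
  exact hn w hw hr

lemma retained_cons {M : ℕ} {ω : PercSpace 2 M} {c : Alpha 2 M} {w : List (Alpha 2 M)} :
    Retained 2 M ω (c :: w) ↔ ω ⟨[c], by simp⟩ = true ∧ Retained 2 M (shift M c ω) w := by
  constructor
  · intro h
    refine ⟨h [c] _ (by simp), fun u hu hp => h (c :: u) (by simp) ?_⟩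
    exact (List.prefix_cons_inj c).2 hp
  · rintro ⟨h1, h2⟩ u hu hp
    cases u with
    | nil => exact absurd rfl hu
    | cons d u =>
      obtain ⟨rfl, hq⟩ := List.cons_prefix_cons.1 hp
      cases u with
      | nil => exact h1
      | cons e u => exact h2 (e :: u) (by simp) hq

lemma ext0_branch {M : ℕ} {ω : PercSpace 2 M}
    (h : ∀ c : Alpha 2 M, ω ⟨[c], by simp⟩ = false ∨ shift M c ω ∈ ext0 M) : ω ∈ ext0 M := by
  have h' : ∀ c : Alpha 2 M, ∃ n, ω ⟨[c], by simp⟩ = false ∨ ∀ w : List (Alpha 2 M), w.length = n → ¬ Retained 2 M (shift M c ω) w := by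
    intro c
    rcases h c with h | h
    · exact ⟨0, Or.inl h⟩
    · obtain ⟨n, hn⟩ := mem_ext0.1 h
      exact ⟨n, Or.inr hn⟩
  choose n hn using h'
  refine mem_ext0.2 ⟨Finset.univ.sup n + 1, fun w hw hr => ?_⟩
  cases w with
  | nil => simp at hw
  | cons c w =>
    obtain ⟨h1, h2⟩ := retained_cons.1 hr
    rcases hn c with h | h
    · rw [h1] at h; cases h
    · refine h (w.take (n c)) ?_ (retained_pfx h2 (List.take_prefix _ _))
      have := Finset.le_sup (f := n) (Finset.mem_univ c)
      simp at hw ⊢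
      omega

/-- Similarity onto the subsquare. -/
def simi (M : ℕ) (c : Alpha 2 M) (x : EuclideanSpace ℝ (Fin 2)) : EuclideanSpace ℝ (Fin 2) :=
  WithLp.toLp 2 (fun i => ((c i : ℕ) + x i) / (M : ℝ))

lemma simi_mem {M : ℕ} (hM : 2 ≤ M) {ω : PercSpace 2 M} {c : Alpha 2 M} (hc : ω ⟨[c], by simp⟩ = true)
    {x : EuclideanSpace ℝ (Fin 2)} (hx : x ∈ percLimit 2 M (shift M c ω)) : simi M c x ∈ percLimit 2 M ω := by
  rw [percLimit_eq, mem_iInter] at hx ⊢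
  intro n
  apply approx_anti hM ω (show n + 1 ≤ n + 1 + 1 by omega)
  have := hx n
  simp only [approx, mem_iUnion, mem_ofPred_eq] at this ⊢
  obtain ⟨w, ⟨hw, hr⟩, hx⟩ := this
  refine ⟨c :: w, ⟨by simp [hw], retained_cons.2 ⟨hc, hr⟩⟩, ?_⟩
  rw [mem_wordCube hM] at hx ⊢
  intro i
  have hM0 : (0 : ℝ) < M := by positivity
  obtain ⟨h1, h2⟩ := hx i
  show _ ≤ ((c i : ℕ) + x i) / (M : ℝ) ∧ ((c i : ℕ) + x i) / (M : ℝ) ≤ _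
  simp only [nco, List.length_cons, pow_succ]
  push_cast
  rw [div_le_iff₀ (by positivity)] at h1
  rw [le_div_iff₀ (by positivity)] at h2
  constructor
  · rw [div_le_div_iff₀ (by positivity) hM0]
    nlinarith
  · rw [div_le_div_iff₀ hM0 (by positivity)]
    nlinarith

lemma propT_branch {M : ℕ} (hM : 2 ≤ M) {t : ℝ} {ω : PercSpace 2 M} {c : Alpha 2 M} (hc : ω ⟨[c], by simp⟩ = true)
    (h : PropT M t (shift M c ω)) : PropT M t ω := by
  intro i j hij a ha
  refine (h i j hij a ha).trans ?_
  have hM0 : (0 : ℝ) < M := by positivity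
  set f := (fun x : EuclideanSpace ℝ (Fin 2) => x i - a * x j) with hf
  set g : ℝ → ℝ := fun y => (M : ℝ) * y - ((c i : ℕ) - a * (c j : ℕ)) with hg
  have hgL : LipschitzWith (M : NNReal) g := by
    refine LipschitzWith.of_dist_le_mul (fun x y => ?_)
    rw [Real.dist_eq, Real.dist_eq, hg]
    simp only
    rw [show (M : ℝ) * x - ((c i : ℕ) - a * (c j : ℕ)) - ((M : ℝ) * y - ((c i : ℕ) - a * (c j : ℕ))) = (M : ℝ) * (x - y) by ring, abs_mul, abs_of_pos hM0]
    simp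
  have hsub : f '' percLimit 2 M (shift M c ω) ⊆ g '' (f '' percLimit 2 M ω) := by
    rintro _ ⟨x, hx, rfl⟩
    refine ⟨f (simi M c x), ⟨simi M c x, simi_mem hM hc hx, rfl⟩, ?_⟩
    show (M : ℝ) * ((((c i : ℕ) + x i) / (M : ℝ)) - a * (((c j : ℕ) + x j) / (M : ℝ))) - ((c i : ℕ) - a * (c j : ℕ)) = x i - a * x j
    field_simp
    ring
  exact (dimH_mono hsub).trans (hgL.dimH_image_le _)

lemma lower_ae {M : ℕ} {p t : ℝ} (hM : 2 ≤ M) (hp0 : 0 < p) (hp1 : p ≤ 1) (ht0 : 0 < t) (ht1 : t < 1)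
    (htb : (M : ℝ) ^ t < (M : ℝ) ^ 2 * p) {P : Measure (PercSpace 2 M)} (hP : IsBernoulliPerc 2 M p P) :
    ∀ᵐ ω ∂P, ω ∈ ext0 M ∨ PropT M t ω := by
  have hprob := hP.1
  have hM1 : (1 : ℝ) < M := by exact_mod_cast (by omega : 1 < M)
  have hb : 1 < (M : ℝ) ^ 2 * p := (Real.one_lt_rpow hM1 ht0).trans htb
  obtain ⟨θ, C, hθ, hC, hCt⟩ := choose_theta hM hp0 ht1 htb
  obtain ⟨δ, m0, hδ, hgood⟩ := good_prob hM hp0 hp1 hb hθ hP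
  set Bad := {ω : PercSpace 2 M | ¬ PropT M t ω} with hBad
  -- infinitely many good levels
  set G : Set (PercSpace 2 M) := ⋂ N : ℕ, ⋃ n ∈ {n | N ≤ n}, good M p θ m0 n with hG
  have hGN : ∀ N : ℕ, MeasurableSet (⋃ n ∈ {n | N ≤ n}, good M p θ m0 n) := fun N =>
    MeasurableSet.biUnion (to_countable _) (fun n _ => measurableSet_good M p θ m0 n)
  have hGm : MeasurableSet G := MeasurableSet.iInter hGN
  have hPG : ENNReal.ofReal δ ≤ P G := by
    have hlim := tendsto_measure_iInter_atTop (μ := P) (s := fun N : ℕ => ⋃ n ∈ {n | N ≤ n}, good M p θ m0 n)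
      (fun N => (hGN N).nullMeasurableSet) (by
        intro N N' h ω hω
        simp only [mem_iUnion, mem_ofPred_eq] at hω ⊢
        obtain ⟨n, hn, h'⟩ := hω
        exact ⟨n, h.trans hn, h'⟩) ⟨0, measure_ne_top _ _⟩
    refine ge_of_tendsto' hlim (fun N => (hgood N).trans (measure_mono ?_))
    intro ω hω
    simp only [mem_iUnion, mem_ofPred_eq]
    exact ⟨N, le_rfl, hω⟩
  have hGB : Bad ⊆ Gᶜ := by
    intro ω hω hωG
    apply hω
    intro i j hij a ha
    refine dim_lower hM hp0 hθ ht0 hC hCt (m0 := m0) (fun N => ?_) hij ha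
    have := mem_iInter.1 hωG N
    simp only [mem_iUnion, mem_ofPred_eq] at this
    obtain ⟨n, hn, h'⟩ := this
    exact ⟨n, hn, h'⟩
  have hDB : ext0 M ⊆ Bad := by
    intro ω hω hcon
    have := hcon 0 1 (by decide) 0 (by simp)
    rw [percLimit_ext0 hM hω, image_empty, dimH_empty] at this
    simp only [nonpos_iff_eq_zero, ENNReal.ofReal_eq_zero] at this
    linarith
  have hconv : ∀ H : Set (PercSpace 2 M), (ENNReal.ofReal (1 - p) + ENNReal.ofReal p * P H) ^ (M ^ 2) =
      ENNReal.ofReal ((1 - p + p * P.real H) ^ (M ^ 2)) := by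
    intro H
    have h1 : 0 ≤ 1 - p := by linarith
    have h2 : 0 ≤ P.real H := measureReal_nonneg
    rw [ENNReal.ofReal_pow (by positivity), ENNReal.ofReal_add h1 (by positivity), ENNReal.ofReal_mul hp0.le]
    simp [Measure.real]
  have hle : ∀ (H : Set (PercSpace 2 M)), P H = ENNReal.ofReal (P.real H) := fun H => by simp [Measure.real]
  have hpos : ∀ (H : Set (PercSpace 2 M)), 0 ≤ (1 - p + p * P.real H) ^ (M ^ 2) := by
    intro H
    have h1 : 0 ≤ 1 - p := by linarith
    have h2 : 0 ≤ P.real H := measureReal_nonneg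
    positivity
  have hfix : P.real Bad = P.real (ext0 M) := by
    refine convex_fix (N := M ^ 2) (by nlinarith) hp0 hp1 measureReal_nonneg (measureReal_mono hDB) ?_ ?_ ?_
    · have h1 : P Bad < 1 := by
        refine lt_of_le_of_lt (measure_mono hGB) ?_
        rw [prob_compl_eq_one_sub hGm]
        exact ENNReal.sub_lt_self one_ne_top one_ne_zero ((ENNReal.ofReal_pos.2 hδ).trans_le hPG).ne'
      rw [hle] at h1
      exact (ENNReal.ofReal_lt_one).1 h1
    · have := branching_prob hp0 hp1 hP (ext0 M) (measurableSet_ext0 M)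
      rw [hconv] at this
      have h2 : P {ω | ∀ i : Alpha 2 M, ω ⟨[i], by simp⟩ = false ∨ shift M i ω ∈ ext0 M} ≤ P (ext0 M) :=
        measure_mono (fun ω hω => ext0_branch hω)
      rw [this, hle (ext0 M), ENNReal.ofReal_le_ofReal_iff measureReal_nonneg] at h2
      exact h2
    · have := branching_prob hp0 hp1 hP (toMeasurable P Bad) (measurableSet_toMeasurable P Bad)
      rw [measure_toMeasurable, hconv] at this
      have h2 : P Bad ≤ P {ω | ∀ i : Alpha 2 M, ω ⟨[i], by simp⟩ = false ∨ shift M i ω ∈ toMeasurable P Bad} := by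
        refine measure_mono (fun ω hω i => ?_)
        rcases Bool.eq_false_or_eq_true (ω ⟨[i], by simp⟩) with h | h
        · right
          refine subset_toMeasurable P Bad ?_
          intro hcon
          exact hω (propT_branch hM h hcon)
        · left; exact h
      rw [this, hle Bad, ENNReal.ofReal_le_ofReal_iff (hpos Bad)] at h2
      exact h2
  have hz : P (Bad \ ext0 M) = 0 := by
    rw [measure_sdiff hDB (measurableSet_ext0 M).nullMeasurableSet (measure_ne_top _ _), hle Bad, hle (ext0 M), hfix, tsub_self]
  rw [ae_iff]
  refine measure_mono_null ?_ hz
  intro ω hω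
  simp only [mem_ofPred_eq, not_or] at hω
  exact ⟨hω.2, hω.1⟩

lemma upper_ae {M : ℕ} {p s : ℝ} (hM : 2 ≤ M) (hp0 : 0 < p) (hs : 0 < s)
    (hsb : (M : ℝ) ^ 2 * p < (M : ℝ) ^ s) {P : Measure (PercSpace 2 M)} (hP : IsBernoulliPerc 2 M p P) :
    ∀ᵐ ω ∂P, dimH (percLimit 2 M ω) ≤ ENNReal.ofReal s := by
  classical
  have hM1 : (1 : ℝ) < M := by exact_mod_cast (by omega : 1 < M)
  have hM0 : (0 : ℝ) < M := by linarith
  have hMs : 0 < (M : ℝ) ^ s := by positivity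
  set F : ℕ → PercSpace 2 M → ℝ≥0∞ := fun n ω => (cnt (words M n) ω : ℝ≥0∞) * ENNReal.ofReal (2 / (M : ℝ) ^ n) ^ s with hF
  have hFm : ∀ n, Measurable (F n) := fun n => (measurable_cnt_enn _).mul_const _
  have hbound : ∀ ω, μH[s] (percLimit 2 M ω) ≤ Filter.liminf (fun n => F n ω) Filter.atTop := by
    intro ω
    have hr : Filter.Tendsto (fun n : ℕ => ENNReal.ofReal (2 / (M : ℝ) ^ n)) Filter.atTop (nhds 0) := by
      rw [← ENNReal.ofReal_zero]
      refine ENNReal.tendsto_ofReal ?_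
      have := (tendsto_pow_atTop_nhds_zero_of_lt_one (inv_nonneg.2 hM0.le) (inv_lt_one_of_one_lt₀ hM1)).const_mul 2
      simpa [div_eq_mul_inv] using this
    have hd : ∀ n : ℕ, ∀ w : {w // w ∈ (words M n).filter (fun v => Retained 2 M ω v)},
        Metric.ediam (wordCube 2 M w.1) ≤ ENNReal.ofReal (2 / (M : ℝ) ^ n) := by
      intro n w
      have hl := mem_words.1 (Finset.mem_filter.1 w.2).1
      refine Metric.ediam_le (fun x hx y hy => ?_)
      rw [edist_dist]
      apply ENNReal.ofReal_le_ofReal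
      have := dist_wordCube hM hx hy
      rwa [hl] at this
    refine (Measure.hausdorffMeasure_le_liminf_sum s (percLimit 2 M ω) (l := Filter.atTop)
      (ι := fun n : ℕ => {w // w ∈ (words M n).filter (fun v => Retained 2 M ω v)})
      (fun n : ℕ => ENNReal.ofReal (2 / (M : ℝ) ^ n)) hr (fun n w => wordCube 2 M w.1)
      (Filter.Eventually.of_forall hd) ?_).trans ?_
    · filter_upwards [Filter.eventually_ge_atTop 1] with n hn x hx
      have := mem_iInter₂.1 hx n hn
      simp only [approx, mem_iUnion, mem_ofPred_eq] at this
      obtain ⟨w, ⟨hw, hr⟩, hx⟩ := this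
      exact mem_iUnion.2 ⟨⟨w, Finset.mem_filter.2 ⟨mem_words.2 hw, hr⟩⟩, hx⟩
    · refine Filter.liminf_le_liminf (Filter.Eventually.of_forall (fun n => ?_))
      refine (Finset.sum_le_card_nsmul _ _ _ (fun w _ => ENNReal.rpow_le_rpow (hd n w) hs.le)).trans ?_
      rw [nsmul_eq_mul]
      simp [hF, cnt]
  have hInt : ∫⁻ ω, Filter.liminf (fun n => F n ω) Filter.atTop ∂P = 0 := by
    refine le_antisymm ((lintegral_liminf_le hFm).trans ?_) bot_le
    have e : ∀ n, ∫⁻ ω, F n ω ∂P = ENNReal.ofReal (2 ^ s * ((M : ℝ) ^ 2 * p / (M : ℝ) ^ s) ^ n) := by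
      intro n
      rw [hF, lintegral_mul_const _ (measurable_cnt_enn _), lintegral_cnt hP _ (fun v hv => mem_words.1 hv), card_words,
        ENNReal.ofReal_rpow_of_nonneg (by positivity) hs.le, ← ENNReal.ofReal_pow hp0.le, ← ENNReal.ofReal_natCast,
        ← ENNReal.ofReal_mul (by positivity), ← ENNReal.ofReal_mul (by positivity)]
      congr 1
      rw [Real.div_rpow (by norm_num) (by positivity), ← Real.rpow_natCast, ← Real.rpow_natCast, ← Real.rpow_mul hM0.le, mul_comm (n : ℝ) s,
        Real.rpow_mul hM0.le, Real.rpow_natCast, Real.rpow_natCast, div_pow, mul_pow]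
      push_cast
      ring
    simp only [e]
    have : Filter.Tendsto (fun n : ℕ => ENNReal.ofReal (2 ^ s * ((M : ℝ) ^ 2 * p / (M : ℝ) ^ s) ^ n)) Filter.atTop (nhds 0) := by
      rw [← ENNReal.ofReal_zero]
      refine ENNReal.tendsto_ofReal ?_
      have := (tendsto_pow_atTop_nhds_zero_of_lt_one (r := (M : ℝ) ^ 2 * p / (M : ℝ) ^ s) (by positivity)
        ((div_lt_one hMs).2 hsb)).const_mul ((2 : ℝ) ^ s)
      simpa using this
    rw [this.liminf_eq]
  rw [lintegral_eq_zero_iff (Measurable.liminf hFm)] at hInt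
  filter_upwards [hInt] with ω hω
  have h0 : μH[s] (percLimit 2 M ω) = 0 := le_antisymm ((hbound ω).trans hω.le) bot_le
  refine dimH_le_of_hausdorffMeasure_ne_top (d := s.toNNReal) ?_
  rw [Real.coe_toNNReal s hs.le, h0]
  exact zero_ne_top

lemma proj_upper (z v : EuclideanSpace ℝ (Fin 2)) (E : Set (EuclideanSpace ℝ (Fin 2))) :
    dimH (lineProj z v '' E) ≤ min 1 (dimH E) := by
  set g : EuclideanSpace ℝ (Fin 2) → ℝ := fun x => (@inner ℝ _ _ (x - z) v) / (@inner ℝ _ _ v v) with hg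
  set h : ℝ → EuclideanSpace ℝ (Fin 2) := fun r => z + r • v with hh
  have hgc : ContDiff ℝ 1 g := by
    rw [hg]
    exact ((contDiff_id.sub contDiff_const).inner ℝ contDiff_const).div_const _
  have hhc : ContDiff ℝ 1 h := by
    rw [hh]
    exact contDiff_const.add (contDiff_id.smul contDiff_const)
  have e : lineProj z v '' E = h '' (g '' E) := by rw [image_image]; rfl
  rw [e]
  refine (hhc.contDiffOn.dimH_image_le convex_univ (subset_univ _)).trans (le_min ?_ (hgc.contDiffOn.dimH_image_le convex_univ (subset_univ _)))
  refine (dimH_mono (subset_univ _)).trans ?_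
  rw [Real.dimH_univ]

lemma proj_lower {M : ℕ} {t : ℝ} {ω : PercSpace 2 M} (h : PropT M t ω) (z v : EuclideanSpace ℝ (Fin 2)) (hv : v ≠ 0) :
    ENNReal.ofReal t ≤ dimH (lineProj z v '' percLimit 2 M ω) := by
  have key : ∀ i j : Fin 2, i ≠ j → |v j| ≤ |v i| → ENNReal.ofReal t ≤ dimH (lineProj z v '' percLimit 2 M ω) := by
    intro i j hij hle
    have hvi : v i ≠ 0 := by
      intro h0
      rw [h0, abs_zero] at hle
      have hj : v j = 0 := abs_eq_zero.1 (le_antisymm hle (abs_nonneg _))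
      apply hv
      ext k
      have : k = i ∨ k = j := by
        revert hij; clear * -; revert i j k; decide
      rcases this with rfl | rfl <;> simp [h0, hj]
    have hinner : ∀ x : EuclideanSpace ℝ (Fin 2), @inner ℝ _ _ x v = x i * v i + x j * v j := by
      intro x
      have : i = 0 ∧ j = 1 ∨ i = 1 ∧ j = 0 := by
        revert hij; clear * -; revert i j; decide
      rw [PiLp.inner_apply, Fin.sum_univ_two]
      simp only [RCLike.inner_apply, conj_trivial]
      rcases this with ⟨rfl, rfl⟩ | ⟨rfl, rfl⟩ <;> ring
    have hvv : @inner ℝ _ _ v v ≠ 0 := inner_self_ne_zero.2 hv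
    refine (h i j hij (-(v j / v i)) ?_).trans ?_
    · rw [abs_neg, abs_div]
      exact div_le_one_of_le₀ hle (abs_nonneg _)
    set g : EuclideanSpace ℝ (Fin 2) → ℝ := fun y => (@inner ℝ _ _ y v) / v i with hg
    have hgc : ContDiff ℝ 1 g := by
      rw [hg]
      exact (contDiff_id.inner ℝ contDiff_const).div_const _
    have hsub : (fun x : EuclideanSpace ℝ (Fin 2) => x i - -(v j / v i) * x j) '' percLimit 2 M ω ⊆
        g '' (lineProj z v '' percLimit 2 M ω) := by
      rintro _ ⟨x, hx, rfl⟩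
      refine ⟨lineProj z v x, ⟨x, hx, rfl⟩, ?_⟩
      simp only [hg, lineProj]
      rw [inner_add_left, inner_smul_left, inner_sub_left]
      simp only [conj_trivial]
      rw [div_mul_cancel₀ _ hvv, add_sub_cancel, hinner]
      field_simp
      ring
    exact (dimH_mono hsub).trans (hgc.contDiffOn.dimH_image_le convex_univ (subset_univ _))
  rcases le_total |v 0| |v 1| with h1 | h1
  · exact key 1 0 (by decide) h1
  · exact key 0 1 (by decide) h1

lemma main_ae {M : ℕ} (hM : 2 ≤ M) {p : ℝ} (hp0 : 0 < p) (hp1 : p ≤ 1)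
    {P : Measure (PercSpace 2 M)} (hP : IsBernoulliPerc 2 M p P) :
    ∀ᵐ ω ∂P, ∀ z v : EuclideanSpace ℝ (Fin 2), v ≠ 0 →
        dimH (lineProj z v '' percLimit 2 M ω) = min 1 (dimH (percLimit 2 M ω)) := by
  have hM1 : (1 : ℝ) < M := by exact_mod_cast (by omega : 1 < M)
  have hl : ∀ᵐ ω ∂P, ∀ t : ℚ, 0 < (t : ℝ) → (t : ℝ) < 1 → (M : ℝ) ^ (t : ℝ) < (M : ℝ) ^ 2 * p → ω ∈ ext0 M ∨ PropT M t ω := by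
    refine ae_all_iff.2 (fun t => ?_)
    by_cases h : 0 < (t : ℝ) ∧ (t : ℝ) < 1 ∧ (M : ℝ) ^ (t : ℝ) < (M : ℝ) ^ 2 * p
    · filter_upwards [lower_ae hM hp0 hp1 h.1 h.2.1 h.2.2 hP] with ω hω _ _ _ using hω
    · exact Filter.Eventually.of_forall (fun ω h1 h2 h3 => absurd ⟨h1, h2, h3⟩ h)
  have hu : ∀ᵐ ω ∂P, ∀ s : ℚ, 0 < (s : ℝ) → (M : ℝ) ^ 2 * p < (M : ℝ) ^ (s : ℝ) → dimH (percLimit 2 M ω) ≤ ENNReal.ofReal s := by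
    refine ae_all_iff.2 (fun s => ?_)
    by_cases h : 0 < (s : ℝ) ∧ (M : ℝ) ^ 2 * p < (M : ℝ) ^ (s : ℝ)
    · filter_upwards [upper_ae hM hp0 h.1 h.2 hP] with ω hω _ _ using hω
    · exact Filter.Eventually.of_forall (fun ω h1 h2 => absurd ⟨h1, h2⟩ h)
  filter_upwards [hl, hu] with ω h1 h2 z v hv
  refine le_antisymm (proj_upper z v _) ?_
  by_contra hcon
  push Not at hcon
  obtain ⟨t, ht0, ht1, ht2⟩ := ENNReal.lt_iff_exists_rat_btwn.1 hcon
  obtain ⟨s, hs0, hs1, hs2⟩ := ENNReal.lt_iff_exists_rat_btwn.1 ht2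
  have e : ∀ q : ℚ, ((Real.toNNReal (q : ℝ) : NNReal) : ℝ≥0∞) = ENNReal.ofReal q := fun q => rfl
  rw [e] at ht1 hs1 hs2
  rw [e] at hs1
  have htpos : 0 < (t : ℝ) := by
    by_contra h
    rw [ENNReal.ofReal_of_nonpos (not_lt.1 h)] at ht1
    exact not_lt_bot ht1
  have hts : (t : ℝ) < s := by
    by_contra h
    exact absurd (ENNReal.ofReal_le_ofReal (not_lt.1 h)) (not_le.2 hs1)
  have hs1' : (s : ℝ) < 1 := ENNReal.ofReal_lt_one.1 (hs2.trans_le (min_le_left _ _))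
  rcases lt_or_ge ((M : ℝ) ^ (t : ℝ)) ((M : ℝ) ^ 2 * p) with h | h
  · rcases h1 t htpos (hts.trans hs1') h with h3 | h3
    · rw [percLimit_ext0 hM h3, dimH_empty] at hs2
      exact not_lt_bot (hs2.trans_le (min_le_right _ _))
    · exact absurd (proj_lower h3 z v hv) (not_le.2 ht1)
  · have h4 := h2 s (htpos.trans hts) (h.trans_lt (Real.rpow_lt_rpow_of_exponent_lt hM1 hts))
    exact absurd h4 (not_le.2 (hs2.trans_le (min_le_right _ _)))

/-- conditioned on `E ≠ ∅`, almost surely for ALL lines `ℓ`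
(including the axis-parallel ones), `dim_H (proj_ℓ E) = min 1 (dim_H E)`. -/
theorem projection_dimension_all_lines
    (M : ℕ) (hM : 2 ≤ M) (p : ℝ) (hp0 : 0 < p) (hp1 : p ≤ 1)
    (P : Measure (PercSpace 2 M)) (hP : IsBernoulliPerc 2 M p P) :
    ∀ᵐ ω ∂(ProbabilityTheory.cond P {ω | percLimit 2 M ω ≠ ∅}),
      ∀ z v : EuclideanSpace ℝ (Fin 2), v ≠ 0 →
        dimH (lineProj z v '' percLimit 2 M ω) = min 1 (dimH (percLimit 2 M ω)) := by
  exact (ProbabilityTheory.cond_absolutelyContinuous).ae_le (main_ae hM hp0 hp1 hP)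
end
end

section
/- Let n ≥ 1, let 𝒞 be an arbitrary collection of level-n M-adic squares in [0,1]² and let F be the union of the squares in 𝒞. Let ℓ be a segment cut out of [0,1]² by a line that is neither horizontal nor vertical, and let ℓ^u, ℓ^l be segments cut out of [0,1]² by two lines parallel to ℓ, lying on opposite sides of ℓ, each at distance from ℓ strictly between M^{-n}/(2√2) and M^{-n}/√2. Then the number of squares K ∈ 𝒞 whose interior meets ℓ is at most 2 M^n (𝓛eb₁(F ∩ ℓ) + 𝓛eb₁(F ∩ ℓ^u) + 𝓛eb₁(F ∩ ℓ^l)), where 𝓛eb₁ denotes one-dimensional Lebesgue measure (length) on the respective line. -/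
open MeasureTheory Set ENNReal ProbabilityTheory Real

noncomputable section

/-- The segment cut out of `[0,1]²` by the line through `z` with direction `v`. -/
def lineSeg (z v : EuclideanSpace ℝ (Fin 2)) : Set (EuclideanSpace ℝ (Fin 2)) :=
  {x | (∃ t : ℝ, x = z + t • v) ∧ ∀ i, 0 ≤ x i ∧ x i ≤ 1}

/-- The line through `z` with direction `v` meets the open unit square. -/
def MeetsOpenSquare (z v : EuclideanSpace ℝ (Fin 2)) : Prop :=
  ∃ t : ℝ, ∀ i, 0 < (z + t • v) i ∧ (z + t • v) i < 1

/-- The line with direction `v` makes an acute angle `> θ` with both coordinate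
axes (the angle with the `x`-axis has sine `|v 1|/‖v‖`, the one with the
`y`-axis has sine `|v 0|/‖v‖`). -/
def AngleSep (θ : ℝ) (v : EuclideanSpace ℝ (Fin 2)) : Prop :=
  Real.sin θ * ‖v‖ < |v 1| ∧ Real.sin θ * ‖v‖ < |v 0|

/-- The closed level-`n` `M`-adic cube of `[0,1]^d` with lower corner `(k i * M⁻ⁿ)ᵢ`. -/
def adicCube (d M n : ℕ) (k : Fin d → ℕ) : Set (EuclideanSpace ℝ (Fin d)) :=
  {x | ∀ i, (k i : ℝ) * (M : ℝ) ^ (-(n : ℤ)) ≤ x i ∧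
      x i ≤ ((k i : ℝ) + 1) * (M : ℝ) ^ (-(n : ℤ))}

/-- The vector `(x, y)` of the Euclidean plane. -/
def vec2 (x y : ℝ) : EuclideanSpace ℝ (Fin 2) :=
  (WithLp.equiv 2 (Fin 2 → ℝ)).symm ![x, y]

/-- real-number core: existence of an offset with long chord. -/
lemma core_offset (A B h d cu cl : ℝ) (hA : 0 ≤ A) (hB : 0 ≤ B) (hAB : A ^ 2 + B ^ 2 = 1)
    (hh : 0 < h) (hd : |d| ≤ h * (A + B))
    (hcu1 : h / √2 < cu) (hcu2 : cu < 2 * h / √2)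
    (hcl1 : -(2 * h / √2) < cl) (hcl2 : cl < -(h / √2)) :
    |d| ≤ h * (A + B - A * B) ∨ |d + cu| ≤ h * (A + B - A * B) ∨
      |d + cl| ≤ h * (A + B - A * B) := by
  have hs : √2 * √2 = 2 := Real.mul_self_sqrt (by norm_num)
  have hsp : 0 < √2 := by positivity
  have hs1 : √2 < 1.415 := by nlinarith
  have hs2 : 1.414 < √2 := by nlinarith
  have e1 : h / √2 = h * (√2 / 2) := by
    field_simp; nlinarith
  have e2 : 2 * h / √2 = h * √2 := by
    field_simp; nlinarith
  rw [e1] at hcu1 hcl2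
  rw [e2] at hcu2 hcl1
  have hP : A * B ≤ 1 / 2 := by nlinarith [sq_nonneg (A - B)]
  have hP0 : 0 ≤ A * B := mul_nonneg hA hB
  have hw1 : 1 ≤ A + B := by nlinarith
  have hw2 : A + B ≤ 1.415 := by nlinarith
  have hw3 : √2 / 2 ≤ A + B - A * B := by
    nlinarith [mul_nonneg (sub_nonneg.2 hw1) (sub_nonneg.2 hw2)]
  have k1 : h * (√2 / 2) ≤ h * (A + B - A * B) := mul_le_mul_of_nonneg_left hw3 hh.le
  have k2 : h * (A * B) ≤ h * (√2 / 2) := mul_le_mul_of_nonneg_left (by linarith) hh.le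
  have hd' := abs_le.1 hd
  by_cases h1 : d ≤ h * (A + B - A * B)
  · by_cases h2 : -(h * (A + B - A * B)) ≤ d
    · left; exact abs_le.2 ⟨h2, h1⟩
    · right; left
      push Not at h2
      rw [abs_le]
      constructor <;> nlinarith
  · right; right
    push Not at h1
    rw [abs_le]
    constructor <;> nlinarith

/-- centre of a chord of half-length `h/2`. -/
lemma core_chord (a b h d : ℝ) (hab : a ^ 2 + b ^ 2 = 1) (ha : a ≠ 0) (hb : b ≠ 0)
    (hh : 0 < h) (hd : |d| ≤ h * (|a| + |b| - |a| * |b|)) :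
    ∃ x y : ℝ, -b * x + a * y = d ∧ |x| ≤ h - h * |a| / 2 ∧ |y| ≤ h - h * |b| / 2 := by
  have hA : 0 < |a| := abs_pos.2 ha
  have hB : 0 < |b| := abs_pos.2 hb
  have hA1 : |a| ≤ 1 := by nlinarith [sq_abs a, sq_abs b]
  have hB1 : |b| ≤ 1 := by nlinarith [sq_abs a, sq_abs b]
  set D := h * (|a| + |b| - |a| * |b|) with hD
  have hDpos : 0 < D := by
    apply mul_pos hh; nlinarith
  have hl : |d / D| ≤ 1 := by
    rw [abs_div, abs_of_pos hDpos]; exact (div_le_one hDpos).2 hd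
  have hal : 0 ≤ h - h * |a| / 2 := by nlinarith
  have hbe : 0 ≤ h - h * |b| / 2 := by nlinarith
  have hsa : a * (a / |a|) = |a| := by
    rw [← mul_div_assoc, ← abs_mul_abs_self a]; field_simp
  have hsb : b * (b / |b|) = |b| := by
    rw [← mul_div_assoc, ← abs_mul_abs_self b]; field_simp
  have habs : ∀ c : ℝ, c ≠ 0 → abs (c / abs c) = 1 := by
    intro c hc
    rw [abs_div, abs_abs, div_self (abs_ne_zero.2 hc)]
  refine ⟨-((b / |b|) * ((h - h * |a| / 2) * (d / D))),
    (a / |a|) * ((h - h * |b| / 2) * (d / D)), ?_, ?_, ?_⟩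
  · calc _ = (b * (b / |b|)) * ((h - h * |a| / 2) * (d / D)) +
          (a * (a / |a|)) * ((h - h * |b| / 2) * (d / D)) := by ring
      _ = D * (d / D) := by rw [hsa, hsb, hD]; ring
      _ = d := mul_div_cancel₀ d hDpos.ne'
  · rw [abs_neg, abs_mul, habs b hb, one_mul, abs_mul, abs_of_nonneg hal]
    exact mul_le_of_le_one_right hal hl
  · rw [abs_mul, habs a ha, one_mul, abs_mul, abs_of_nonneg hbe]
    exact mul_le_of_le_one_right hbe hl

lemma adicCube_convex (M n : ℕ) (k : Fin 2 → ℕ) : Convex ℝ (adicCube 2 M n k) := by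
  intro x hx y hy s t hs ht hst i
  obtain ⟨h1, h2⟩ := hx i
  obtain ⟨h3, h4⟩ := hy i
  simp only [PiLp.add_apply, PiLp.smul_apply, smul_eq_mul]
  have hs' : s = 1 - t := by linarith
  subst hs'
  constructor <;> nlinarith

lemma adicCube_closed (M n : ℕ) (k : Fin 2 → ℕ) : IsClosed (adicCube 2 M n k) := by
  have : adicCube 2 M n k = ⋂ i, {x : EuclideanSpace ℝ (Fin 2) |
      (k i : ℝ) * (M : ℝ) ^ (-(n : ℤ)) ≤ x i ∧
      x i ≤ ((k i : ℝ) + 1) * (M : ℝ) ^ (-(n : ℤ))} := by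
    ext x; simp [adicCube]
  rw [this]
  refine isClosed_iInter fun i => ?_
  have h1 : Continuous fun x : EuclideanSpace ℝ (Fin 2) => x i := by fun_prop
  exact (isClosed_le continuous_const h1).inter (isClosed_le h1 continuous_const)

/-- the full line. -/
def fullLine (z v : EuclideanSpace ℝ (Fin 2)) : Set (EuclideanSpace ℝ (Fin 2)) :=
  {x | ∃ t : ℝ, x = z + t • v}

lemma fullLine_eq (z v : EuclideanSpace ℝ (Fin 2)) (hv0 : v 0 ≠ 0) :
    fullLine z v = {x | (x 0 - z 0) * v 1 = (x 1 - z 1) * v 0} := by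
  ext x
  constructor
  · rintro ⟨t, rfl⟩
    simp; ring
  · intro hx
    simp only [mem_ofPred_eq] at hx
    refine ⟨(x 0 - z 0) / v 0, ?_⟩
    ext i
    fin_cases i
    · simp; field_simp; ring
    · simp; field_simp; linarith

lemma fullLine_closed (z v : EuclideanSpace ℝ (Fin 2)) (hv0 : v 0 ≠ 0) :
    IsClosed (fullLine z v) := by
  rw [fullLine_eq z v hv0]
  exact isClosed_eq (by fun_prop) (by fun_prop)

lemma fullLine_convex (z v : EuclideanSpace ℝ (Fin 2)) : Convex ℝ (fullLine z v) := by
  rintro x ⟨t, rfl⟩ y ⟨r, rfl⟩ α β hα hβ h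
  refine ⟨α * t + β * r, ?_⟩
  have : α = 1 - β := by linarith
  subst this
  module

/-- a cube meets the segment in the same set as the full line. -/
lemma cube_inter_lineSeg (M n : ℕ) (hM : 2 ≤ M) (k : Fin 2 → ℕ) (hk : ∀ i, k i < M ^ n)
    (z v : EuclideanSpace ℝ (Fin 2)) :
    adicCube 2 M n k ∩ lineSeg z v = adicCube 2 M n k ∩ fullLine z v := by
  have hMp : (0 : ℝ) < (M : ℝ) ^ (-(n : ℤ)) := by positivity
  ext x
  constructor
  · rintro ⟨h1, h2, -⟩; exact ⟨h1, h2⟩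
  · rintro ⟨h1, h2⟩
    refine ⟨h1, h2, fun i => ?_⟩
    obtain ⟨h3, h4⟩ := h1 i
    constructor
    · exact le_trans (by positivity) h3
    · refine h4.trans ?_
      have : ((k i : ℝ) + 1) ≤ (M : ℝ) ^ n := by exact_mod_cast hk i
      calc _ ≤ (M : ℝ) ^ n * (M : ℝ) ^ (-(n : ℤ)) := by gcongr
        _ = 1 := by
          rw [zpow_neg, zpow_natCast]
          have : (M : ℝ) ^ n ≠ 0 := by positivity
          field_simp

lemma cubes_inter_null (M n : ℕ) (hM : 2 ≤ M) (k k' : Fin 2 → ℕ) (hkk : k ≠ k')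
    (z v : EuclideanSpace ℝ (Fin 2)) (hv0 : v 0 ≠ 0) (hv1 : v 1 ≠ 0) :
    μH[1] ((adicCube 2 M n k ∩ fullLine z v) ∩ (adicCube 2 M n k' ∩ fullLine z v)) = 0 := by
  have hMp : (0 : ℝ) < (M : ℝ) ^ (-(n : ℤ)) := by positivity
  have := Measure.nullSingletonClass_hausdorff (EuclideanSpace ℝ (Fin 2)) (d := 1) one_pos
  refine Set.Subsingleton.measure_zero ?_ _
  obtain ⟨i, hi⟩ := Function.ne_iff.1 hkk
  have hvi : v i ≠ 0 := by fin_cases i <;> assumption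
  have key : ∃ c : ℝ, ∀ x, x ∈ adicCube 2 M n k → x ∈ adicCube 2 M n k' → x i = c := by
    rcases lt_or_gt_of_ne hi with hlt | hlt
    · refine ⟨(k' i : ℝ) * (M : ℝ) ^ (-(n : ℤ)), fun x hx hx' => ?_⟩
      have h1 : ((k i : ℝ) + 1) ≤ k' i := by exact_mod_cast hlt
      have := (hx i).2
      have := (hx' i).1
      nlinarith
    · refine ⟨(k i : ℝ) * (M : ℝ) ^ (-(n : ℤ)), fun x hx hx' => ?_⟩
      have h1 : ((k' i : ℝ) + 1) ≤ k i := by exact_mod_cast hlt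
      have := (hx i).1
      have := (hx' i).2
      nlinarith
  obtain ⟨c, hc⟩ := key
  rintro x ⟨⟨hx, t, ht⟩, hx', -⟩ y ⟨⟨hy, r, hr⟩, hy', -⟩
  have e : x i = y i := (hc x hx hx').trans (hc y hy hy').symm
  have : t = r := by
    rw [ht, hr] at e
    simpa [hvi] using e
  rw [ht, hr, this]

/-- a long chord in the line at offset `c`. -/
lemma chord_measure (M n : ℕ) (hM : 2 ≤ M) (k : Fin 2 → ℕ)
    (z v : EuclideanSpace ℝ (Fin 2)) (hv0 : v 0 ≠ 0) (hv1 : v 1 ≠ 0) (c a b h : ℝ)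
    (hh : h = (M : ℝ) ^ (-(n : ℤ)) / 2)
    (ha : a = v 0 / ‖v‖) (hb : b = v 1 / ‖v‖) (hab : a ^ 2 + b ^ 2 = 1)
    (hd : |-b * (z 0 - ((k 0 : ℝ) * (2 * h) + h)) + a * (z 1 - ((k 1 : ℝ) * (2 * h) + h)) + c|
      ≤ h * (|a| + |b| - |a| * |b|)) :
    ENNReal.ofReal h ≤ μH[1] (adicCube 2 M n k ∩
      fullLine (z + (c * ‖v‖⁻¹) • vec2 (-(v 1)) (v 0)) v) := by
  have hMp : (0 : ℝ) < (M : ℝ) ^ (-(n : ℤ)) := by positivity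
  have hhp : 0 < h := by rw [hh]; positivity
  have hs : (M : ℝ) ^ (-(n : ℤ)) = 2 * h := by linarith
  have hvn : v ≠ 0 := by rintro rfl; simp at hv0
  have hnv : 0 < ‖v‖ := norm_pos_iff.2 hvn
  have ha0 : a ≠ 0 := by rw [ha]; positivity
  have hb0 : b ≠ 0 := by rw [hb]; positivity
  have hva : v 0 = a * ‖v‖ := by rw [ha]; field_simp
  have hvb : v 1 = b * ‖v‖ := by rw [hb]; field_simp
  obtain ⟨x, y, hxy, hx, hy⟩ := core_chord a b h _ hab ha0 hb0 hhp hd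
  -- the points
  let P : ℝ → EuclideanSpace ℝ (Fin 2) := fun s =>
    !₂[(k 0 : ℝ) * (2 * h) + h + x + s * a, (k 1 : ℝ) * (2 * h) + h + y + s * b]
  have hPcube : ∀ s, |s| ≤ h / 2 → P s ∈ adicCube 2 M n k := by
    intro s hs'
    have hsa : |s * a| ≤ h * |a| / 2 := by
      rw [abs_mul]; nlinarith [abs_nonneg a]
    have hsb : |s * b| ≤ h * |b| / 2 := by
      rw [abs_mul]; nlinarith [abs_nonneg b]
    rw [abs_le] at hsa hsb hx hy
    intro i
    rw [hs]
    fin_cases i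
    · simp [P]; constructor <;> linarith
    · simp [P]; constructor <;> linarith
  have hPline : ∀ s, P s ∈ fullLine (z + (c * ‖v‖⁻¹) • vec2 (-(v 1)) (v 0)) v := by
    intro s
    rw [fullLine_eq _ _ hv0]
    simp only [mem_ofPred_eq, P, vec2, hva, hvb]
    simp
    have e : c * ‖v‖⁻¹ * (b * ‖v‖) = c * b := by field_simp
    have e' : c * ‖v‖⁻¹ * (a * ‖v‖) = c * a := by field_simp
    rw [e, e']
    linear_combination (-‖v‖) * hxy + (c * ‖v‖) * hab
  have hsub : segment ℝ (P (-(h / 2))) (P (h / 2)) ⊆ adicCube 2 M n k ∩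
      fullLine (z + (c * ‖v‖⁻¹) • vec2 (-(v 1)) (v 0)) v := by
    apply ((adicCube_convex M n k).inter (fullLine_convex _ _)).segment_subset
    · exact ⟨hPcube _ (by rw [abs_neg, abs_of_pos (by positivity)]), hPline _⟩
    · exact ⟨hPcube _ (by rw [abs_of_pos (by positivity)]), hPline _⟩
  refine le_trans (le_of_eq ?_) (measure_mono hsub)
  rw [hausdorffMeasure_segment, edist_dist]
  congr 1
  rw [EuclideanSpace.dist_eq, Fin.sum_univ_two]
  simp only [P, Real.dist_eq, sq_abs]
  simp
  symm
  rw [Real.sqrt_eq_iff_mul_self_eq (by positivity) hhp.le]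
  linear_combination (h ^ 2) * hab

lemma per_square (M n : ℕ) (hM : 2 ≤ M) (k : Fin 2 → ℕ)
    (z v : EuclideanSpace ℝ (Fin 2)) (hv0 : v 0 ≠ 0) (hv1 : v 1 ≠ 0) (cu cl h : ℝ)
    (hh : h = (M : ℝ) ^ (-(n : ℤ)) / 2)
    (hcu : cu ∈ Set.Ioo ((M : ℝ) ^ (-(n : ℤ)) / (2 * Real.sqrt 2))
        ((M : ℝ) ^ (-(n : ℤ)) / Real.sqrt 2))
    (hcl : cl ∈ Set.Ioo (-((M : ℝ) ^ (-(n : ℤ)) / Real.sqrt 2))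
        (-((M : ℝ) ^ (-(n : ℤ)) / (2 * Real.sqrt 2))))
    (hne : (adicCube 2 M n k ∩ fullLine z v).Nonempty) :
    ENNReal.ofReal h ≤ μH[1] (adicCube 2 M n k ∩ fullLine z v) +
      μH[1] (adicCube 2 M n k ∩ fullLine (z + (cu * ‖v‖⁻¹) • vec2 (-(v 1)) (v 0)) v) +
      μH[1] (adicCube 2 M n k ∩ fullLine (z + (cl * ‖v‖⁻¹) • vec2 (-(v 1)) (v 0)) v) := by
  have hMp : (0 : ℝ) < (M : ℝ) ^ (-(n : ℤ)) := by positivity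
  have hhp : 0 < h := by rw [hh]; positivity
  have hs : (M : ℝ) ^ (-(n : ℤ)) = 2 * h := by linarith
  have hvn : v ≠ 0 := by rintro rfl; simp at hv0
  have hnv : 0 < ‖v‖ := norm_pos_iff.2 hvn
  obtain ⟨a, ha⟩ : ∃ a, a = v 0 / ‖v‖ := ⟨_, rfl⟩
  obtain ⟨b, hb⟩ : ∃ b, b = v 1 / ‖v‖ := ⟨_, rfl⟩
  have hva : v 0 = a * ‖v‖ := by rw [ha]; field_simp
  have hvb : v 1 = b * ‖v‖ := by rw [hb]; field_simp
  have hab : a ^ 2 + b ^ 2 = 1 := by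
    have := EuclideanSpace.norm_sq_eq v
    rw [Fin.sum_univ_two] at this
    simp only [Real.norm_eq_abs, sq_abs] at this
    rw [ha, hb]; field_simp; linarith
  obtain ⟨p, hp, t, ht⟩ := hne
  have hd : |-b * (z 0 - ((k 0 : ℝ) * (2 * h) + h)) + a * (z 1 - ((k 1 : ℝ) * (2 * h) + h))|
      ≤ h * (|a| + |b|) := by
    have hz : -b * (z 0 - ((k 0 : ℝ) * (2 * h) + h)) + a * (z 1 - ((k 1 : ℝ) * (2 * h) + h))
      = -b * (p 0 - ((k 0 : ℝ) * (2 * h) + h)) + a * (p 1 - ((k 1 : ℝ) * (2 * h) + h)) := by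
      rw [ht]; simp; rw [hva, hvb]; ring
    rw [hz]
    have h0 := hp 0
    have h1 := hp 1
    rw [hs] at h0 h1
    have q0 : |p 0 - ((k 0 : ℝ) * (2 * h) + h)| ≤ h := by
      rw [abs_le]; constructor <;> linarith [h0.1, h0.2]
    have q1 : |p 1 - ((k 1 : ℝ) * (2 * h) + h)| ≤ h := by
      rw [abs_le]; constructor <;> linarith [h1.1, h1.2]
    refine (abs_add_le _ _).trans ?_
    rw [abs_mul, abs_mul, abs_neg]
    nlinarith [abs_nonneg a, abs_nonneg b]
  rw [hs] at hcu hcl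
  have e : 2 * h / (2 * √2) = h / √2 := by field_simp
  rw [e] at hcu hcl
  have key := fun c => chord_measure M n hM k z v hv0 hv1 c a b h hh ha hb hab
  rcases core_offset |a| |b| h _ cu cl (abs_nonneg a) (abs_nonneg b) (by simpa using hab) hhp hd
    hcu.1 hcu.2 hcl.1 hcl.2 with H | H | H
  · have := key 0 (by simpa using H)
    simp only [zero_mul, zero_smul, add_zero] at this
    exact this.trans (le_trans le_self_add le_self_add)
  · exact (key cu H).trans (le_trans le_add_self le_self_add)
  · exact (key cl H).trans le_add_self

lemma sum_le_union (M n : ℕ) (hM : 2 ≤ M)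
    (𝒞 : Set (Fin 2 → ℕ)) (h𝒞 : ∀ k ∈ 𝒞, ∀ i, k i < M ^ n)
    (z v : EuclideanSpace ℝ (Fin 2)) (hv0 : v 0 ≠ 0) (hv1 : v 1 ≠ 0)
    (S : Finset (Fin 2 → ℕ)) (hS : ∀ k ∈ S, k ∈ 𝒞) :
    ∑ k ∈ S, μH[1] (adicCube 2 M n k ∩ fullLine z v) ≤
      μH[1] ((⋃ k ∈ 𝒞, adicCube 2 M n k) ∩ lineSeg z v) := by
  rw [← measure_biUnion_finset₀]
  · refine measure_mono (iUnion₂_subset fun k hk => ?_)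
    rw [← cube_inter_lineSeg M n hM k (h𝒞 k (hS k hk))]
    exact inter_subset_inter_left _ (subset_biUnion_of_mem (u := fun k => adicCube 2 M n k) (hS k hk))
  · intro k _ k' _ hkk
    exact cubes_inter_null M n hM k k' hkk z v hv0 hv1
  · intro k _
    exact ((adicCube_closed M n k).inter
      (fullLine_closed z v hv0)).measurableSet.nullMeasurableSet

/-- a deterministic counting estimate.  If `ℓᵘ, ℓˡ` are segments cut
out by lines parallel to `ℓ`, on opposite sides of it, at distance in
`(M⁻ⁿ/(2√2), M⁻ⁿ/√2)` from it, then the number of level-`n` squares of the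
collection `𝒞` whose interior meets `ℓ` is at most
`2 Mⁿ (|F ∩ ℓ| + |F ∩ ℓᵘ| + |F ∩ ℓˡ|)` where `F` is the union of `𝒞`. -/
theorem count_by_three_slices
    (M n : ℕ) (hM : 2 ≤ M) (hn : 1 ≤ n)
    (𝒞 : Set (Fin 2 → ℕ)) (h𝒞 : ∀ k ∈ 𝒞, ∀ i, k i < M ^ n)
    (z v : EuclideanSpace ℝ (Fin 2)) (hv0 : v 0 ≠ 0) (hv1 : v 1 ≠ 0)
    (cu cl : ℝ)
    (hcu : cu ∈ Set.Ioo ((M : ℝ) ^ (-(n : ℤ)) / (2 * Real.sqrt 2))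
        ((M : ℝ) ^ (-(n : ℤ)) / Real.sqrt 2))
    (hcl : cl ∈ Set.Ioo (-((M : ℝ) ^ (-(n : ℤ)) / Real.sqrt 2))
        (-((M : ℝ) ^ (-(n : ℤ)) / (2 * Real.sqrt 2)))) :
    (({k ∈ 𝒞 | (interior (adicCube 2 M n k) ∩ lineSeg z v).Nonempty}.ncard : ℝ≥0∞)) ≤
      2 * (M : ℝ≥0∞) ^ n *
        (μH[1] ((⋃ k ∈ 𝒞, adicCube 2 M n k) ∩ lineSeg z v) +
         μH[1] ((⋃ k ∈ 𝒞, adicCube 2 M n k) ∩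
            lineSeg (z + (cu * ‖v‖⁻¹) • vec2 (-(v 1)) (v 0)) v) +
         μH[1] ((⋃ k ∈ 𝒞, adicCube 2 M n k) ∩
            lineSeg (z + (cl * ‖v‖⁻¹) • vec2 (-(v 1)) (v 0)) v)) := by
  have hMp : (0 : ℝ) < (M : ℝ) ^ (-(n : ℤ)) := by positivity
  have hfin : {k ∈ 𝒞 | (interior (adicCube 2 M n k) ∩ lineSeg z v).Nonempty}.Finite := by
    refine (Set.Finite.pi' (t := fun _ : Fin 2 => Set.Iio (M ^ n)) fun _ => Set.finite_Iio _).subset ?_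
    rintro k ⟨hk, -⟩ i
    exact h𝒞 k hk i
  rw [Set.ncard_eq_toFinset_card _ hfin]
  set S := hfin.toFinset with hSdef
  have hS : ∀ k ∈ S, k ∈ 𝒞 := fun k hk => (hfin.mem_toFinset.1 hk).1
  obtain ⟨h, hh⟩ : ∃ h, h = (M : ℝ) ^ (-(n : ℤ)) / 2 := ⟨_, rfl⟩
  have hsum : (S.card : ℝ≥0∞) * ENNReal.ofReal h ≤
      μH[1] ((⋃ k ∈ 𝒞, adicCube 2 M n k) ∩ lineSeg z v) +
         μH[1] ((⋃ k ∈ 𝒞, adicCube 2 M n k) ∩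
            lineSeg (z + (cu * ‖v‖⁻¹) • vec2 (-(v 1)) (v 0)) v) +
         μH[1] ((⋃ k ∈ 𝒞, adicCube 2 M n k) ∩
            lineSeg (z + (cl * ‖v‖⁻¹) • vec2 (-(v 1)) (v 0)) v) := by
    have h1 : ∀ k ∈ S, ENNReal.ofReal h ≤ _ := fun k hk =>
      per_square M n hM k z v hv0 hv1 cu cl h hh hcu hcl (by
        obtain ⟨p, hp, hp'⟩ := (hfin.mem_toFinset.1 hk).2
        exact ⟨p, interior_subset hp, hp'.1⟩)
    have h2 := Finset.sum_le_sum h1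
    rw [Finset.sum_const, nsmul_eq_mul, Finset.sum_add_distrib, Finset.sum_add_distrib] at h2
    have h3 := fun z' => sum_le_union M n hM 𝒞 h𝒞 z' v hv0 hv1 S hS
    exact h2.trans (add_le_add (add_le_add (h3 _) (h3 _)) (h3 _))
  have hone : 2 * (M : ℝ≥0∞) ^ n * ENNReal.ofReal h = 1 := by
    have e : 2 * (M : ℝ≥0∞) ^ n = ENNReal.ofReal (2 * (M : ℝ) ^ n) := by
      rw [ENNReal.ofReal_mul (by norm_num), ENNReal.ofReal_pow (by positivity)]
      simp
    rw [e, ← ENNReal.ofReal_mul (by positivity), ← ENNReal.ofReal_one]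
    congr 1
    rw [hh, zpow_neg, zpow_natCast]
    have : (M : ℝ) ^ n ≠ 0 := by positivity
    field_simp
  calc (S.card : ℝ≥0∞) = 2 * (M : ℝ≥0∞) ^ n * (S.card * ENNReal.ofReal h) := by
        rw [mul_left_comm, hone, mul_one]
    _ ≤ _ := by gcongr
end
end
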